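/- Suppose 0 < s₁ ≤ s₂ ≤ 1 and let g be holomorphic on the unit disc D. Then: (i) the Volterra operator T_g maps Q_{s₁} into Q_{s₂} if and only if g ∈ Q_{s₂,log,1}; (ii) the operator I_g maps Q_{s₁} into Q_{s₂} if and only if g ∈ H^∞; (iii) the multiplication operator M_g maps Q_{s₁} into Q_{s₂} if and only if g ∈ Q_{s₂,log,1} ∩ H^∞. -/

import Mathlib

open MeasureTheory Metric Complex Real Filter Set

noncomputable section

/-- `f` is holomorphic on the open unit disc. -/
def HolOn (f : ℂ → ℂ) : Prop := DifferentiableOn ℂ f (Metric.ball (0:ℂ) 1)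

/-- The normalized Lebesgue area measure on `ℂ` (so the unit disc has total mass 1). -/
def dA : Measure ℂ := (ENNReal.ofReal π)⁻¹ • volume

/-- Bounded holomorphic functions on the unit disc. -/
def Hinf : Set (ℂ → ℂ) :=
  {f | HolOn f ∧ ∃ C : ℝ, ∀ z ∈ Metric.ball (0:ℂ) 1, norm (f z) ≤ C}

/-- The Bloch space. -/
def Bloch : Set (ℂ → ℂ) :=
  {f | HolOn f ∧ ∃ C : ℝ, ∀ z ∈ Metric.ball (0:ℂ) 1,
      (1 - norm z ^ 2) * norm (deriv f z) ≤ C}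

/-- The little Bloch space: `(1-|z|²)|f'(z)| → 0` as `|z| → 1⁻`. -/
def littleBloch : Set (ℂ → ℂ) :=
  {f | HolOn f ∧ ∀ ε : ℝ, 0 < ε → ∃ r : ℝ, r < 1 ∧ ∀ z ∈ Metric.ball (0:ℂ) 1,
      r < norm z → (1 - norm z ^ 2) * norm (deriv f z) < ε}

/-- The `α`-logarithmic Bloch space. -/
def BlochLog (α : ℝ) : Set (ℂ → ℂ) :=
  {f | HolOn f ∧ ∃ C : ℝ, ∀ z ∈ Metric.ball (0:ℂ) 1,
      (1 - norm z ^ 2) * (Real.log (2 / (1 - norm z ^ 2))) ^ α *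
        norm (deriv f z) ≤ C}

/-- The Besov space `B¹`: holomorphic `f` with `∫_D |f''| dA < ∞`. -/
def Besov1 : Set (ℂ → ℂ) :=
  {f | HolOn f ∧ ∫⁻ z in Metric.ball (0:ℂ) 1,
      ENNReal.ofReal (norm (deriv (deriv f) z)) ∂dA < ⊤}

/-- The Besov space `Bᵖ` (`1 < p < ∞`): `∫_D (1-|z|)^(p-2) |f'(z)|^p dA(z) < ∞`. -/
def Besov (p : ℝ) : Set (ℂ → ℂ) :=
  {f | HolOn f ∧ ∫⁻ z in Metric.ball (0:ℂ) 1,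
      ENNReal.ofReal ((1 - norm z) ^ (p - 2) * norm (deriv f z) ^ p) ∂dA < ⊤}

open scoped Classical in
/-- The Besov space `Bᵖ` for all `1 ≤ p < ∞` (with the special definition at `p = 1`). -/
def BesovFull (p : ℝ) : Set (ℂ → ℂ) := if p = 1 then Besov1 else Besov p

/-- The Möbius transformation `φ_a(z) = (a-z)/(1 - conj a · z)`. -/
def phi (a z : ℂ) : ℂ := (a - z) / (1 - (starRingEnd ℂ) a * z)

/-- The space `Q_s`. -/
def Qs (s : ℝ) : Set (ℂ → ℂ) :=
  {f | HolOn f ∧ ⨆ a ∈ Metric.ball (0:ℂ) 1, ∫⁻ z in Metric.ball (0:ℂ) 1,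
      ENNReal.ofReal (norm (deriv f z) ^ 2 *
        (1 - norm (phi a z) ^ 2) ^ s) ∂dA < ⊤}

/-- The space `Q_{s,log,α}`. -/
def QsLog (s α : ℝ) : Set (ℂ → ℂ) :=
  {f | HolOn f ∧ ⨆ a ∈ Metric.ball (0:ℂ) 1,
      (ENNReal.ofReal ((Real.log (2 / (1 - norm a))) ^ (2 * α)) *
        ∫⁻ z in Metric.ball (0:ℂ) 1,
          ENNReal.ofReal (norm (deriv f z) ^ 2 *
            (1 - norm (phi a z) ^ 2) ^ s) ∂dA) < ⊤}

/-- The Volterra operator `T_g(f)(z) = ∫_0^z g'(ξ) f(ξ) dξ` (along the segment from 0 to z). -/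
def Tg (g f : ℂ → ℂ) : ℂ → ℂ :=
  fun z => z * ∫ t in (0:ℝ)..1, deriv g ((t : ℂ) * z) * f ((t : ℂ) * z)

/-- The companion operator `I_g(f)(z) = ∫_0^z g(ξ) f'(ξ) dξ` (along the segment from 0 to z). -/
def Ig (g f : ℂ → ℂ) : ℂ → ℂ :=
  fun z => z * ∫ t in (0:ℝ)..1, g ((t : ℂ) * z) * deriv f ((t : ℂ) * z)

/-- The multiplication operator `M_g(f) = g · f`. -/
def Mg (g f : ℂ → ℂ) : ℂ → ℂ := fun z => g z * f z

/-- `T` maps `X` into `Y`. -/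
def MapsInto (T : (ℂ → ℂ) → (ℂ → ℂ)) (X Y : Set (ℂ → ℂ)) : Prop :=
  ∀ f ∈ X, T f ∈ Y

/-- The Hardy space `H^q`. -/
def Hardy (q : ℝ) : Set (ℂ → ℂ) :=
  {f | HolOn f ∧ ∃ C : ℝ, ∀ r : ℝ, 0 < r → r < 1 →
      (1 / (2 * π)) * ∫ t in (0:ℝ)..(2 * π),
        norm (f ((r : ℂ) * Complex.exp ((t : ℂ) * Complex.I))) ^ q ≤ C}

/-- An inner function: bounded holomorphic with radial boundary values of modulus 1 a.e. -/
def IsInner (g : ℂ → ℂ) : Prop :=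
  g ∈ Hinf ∧ ∀ᵐ t : ℝ ∂(volume.restrict (Set.Ioc (0:ℝ) (2 * π))),
    Filter.Tendsto (fun r : ℝ => norm (g ((r : ℂ) * Complex.exp ((t : ℂ) * Complex.I))))
      (nhdsWithin 1 (Set.Iio 1)) (nhds 1)

/-- `X` has the f-property (division by inner functions). -/
def FProperty (X : Set (ℂ → ℂ)) : Prop :=
  ∀ h ∈ X, ∀ g : ℂ → ℂ, IsInner g →
    (fun z => h z / g z) ∈ Hardy 1 → (fun z => h z / g z) ∈ X

/-- The space of multipliers `M(X,Y)`. -/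
def Mult (X Y : Set (ℂ → ℂ)) : Set (ℂ → ℂ) :=
  {g | HolOn g ∧ ∀ f ∈ X, (fun z => g z * f z) ∈ Y}

end

/-!
Write `w_{s,a} = (1 - |φ_a|²)^s`, so that `f ∈ Q_s` says that `f'` is bounded in `L²(w_{s,a} dA)`
uniformly in `a`. Since `(T_g f)' = g' f`, `(I_g f)' = g f'` and `(g f)' = g' f + g f'`, everything
is about weighted norms of these functions. For the sufficiency of `g ∈ Q_{s,log,1}`, one bounds
`|f - f(a)|` along the rays from `a` by the Cauchy-Schwarz inequality with the logarithmic weight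
`1 + log²`; the growth `|f(a)| ≲ log (2 / (1 - |a|))` is exactly compensated by the logarithm in
the norm of `g`.

For the necessity, the test functions `log (1 - conj a * z)` are bounded in `Q_{s₁}`. An operator
that merely maps `Q_{s₁}` into `Q_{s₂}` is bounded on them: apply the uniform boundedness principle
on `ℓ¹`, sending a summable sequence to the combination of test functions it defines. Evaluating the
resulting inequalities at `a` gives `g ∈ H^∞`, and comparing the weights at `a` and at the
hyperbolic midpoint of `0` and `a` gives `g ∈ Q_{s₂,log,1}`.
-/

noncomputable section

open scoped ENNReal NNReal ComplexConjugate Topology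

/-! ### Möbius transformations of the disc -/

section Moebius

variable {a c z w : ℂ}

lemma one_sub_norm_mul_norm_le (a z : ℂ) : 1 - ‖a‖ * ‖z‖ ≤ ‖1 - conj a * z‖ := by
  simpa using norm_sub_norm_le (1 : ℂ) (conj a * z)

lemma one_sub_norm_le_left (hz : ‖z‖ ≤ 1) : 1 - ‖a‖ ≤ ‖1 - conj a * z‖ := by
  nlinarith [one_sub_norm_mul_norm_le a z, norm_nonneg a]

lemma one_sub_conj_mul_ne_zero (ha : ‖a‖ < 1) (hz : ‖z‖ < 1) : 1 - conj a * z ≠ 0 :=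
  norm_pos_iff.1 ((sub_pos.2 ha).trans_le (one_sub_norm_le_left hz.le))

lemma norm_one_sub_conj_mul_comm (a z : ℂ) : ‖1 - conj a * z‖ = ‖1 - conj z * a‖ := by
  rw [← RCLike.norm_conj, map_sub, map_one, map_mul, Complex.conj_conj, mul_comm]

lemma one_sub_norm_sq_pos (ha : ‖a‖ < 1) : 0 < 1 - ‖a‖ ^ 2 := by
  nlinarith [norm_nonneg a]

lemma norm_one_sub_conj_mul_self (ha : ‖a‖ ≤ 1) : ‖1 - conj a * a‖ = 1 - ‖a‖ ^ 2 := by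
  rw [Complex.conj_mul', ← Complex.ofReal_pow, ← Complex.ofReal_one, ← Complex.ofReal_sub,
    Complex.norm_of_nonneg (by nlinarith [norm_nonneg a])]

lemma one_sub_norm_phi_sq (h : 1 - conj a * z ≠ 0) :
    1 - ‖phi a z‖ ^ 2 = (1 - ‖a‖ ^ 2) * (1 - ‖z‖ ^ 2) / ‖1 - conj a * z‖ ^ 2 := by
  have hd : ‖1 - conj a * z‖ ^ 2 ≠ 0 := pow_ne_zero 2 (norm_ne_zero_iff.2 h)
  rw [phi, norm_div, div_pow, eq_div_iff hd, sub_mul, div_mul_cancel₀ _ hd]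
  simp only [← Complex.normSq_eq_norm_sq, Complex.normSq_apply, sub_re, sub_im, mul_re, mul_im,
    one_re, one_im, conj_re, conj_im]
  ring

lemma one_sub_norm_phi_sq_pos (ha : ‖a‖ < 1) (hz : ‖z‖ < 1) : 0 < 1 - ‖phi a z‖ ^ 2 := by
  have hd := one_sub_conj_mul_ne_zero ha hz
  rw [one_sub_norm_phi_sq hd]
  exact div_pos (mul_pos (one_sub_norm_sq_pos ha) (one_sub_norm_sq_pos hz))
    (pow_pos (norm_pos_iff.2 hd) 2)

lemma norm_phi_lt_one (ha : ‖a‖ < 1) (hz : ‖z‖ < 1) : ‖phi a z‖ < 1 := by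
  nlinarith [norm_nonneg (phi a z), one_sub_norm_phi_sq_pos ha hz]

@[simp] lemma phi_zero_right (a : ℂ) : phi a 0 = a := by simp [phi]

@[simp] lemma phi_zero_left (z : ℂ) : phi 0 z = -z := by simp [phi]

lemma phi_phi (ha : ‖a‖ < 1) (hz : ‖z‖ < 1) : phi a (phi a z) = z := by
  have hd := one_sub_conj_mul_ne_zero ha hz
  have hmul : phi a z * (1 - conj a * z) = a - z := div_mul_cancel₀ _ hd
  rw [phi, div_eq_iff (one_sub_conj_mul_ne_zero ha (norm_phi_lt_one ha hz))]
  refine mul_right_cancel₀ hd ?_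
  linear_combination (z * conj a - 1) * hmul

lemma one_sub_conj_phi_mul_phi (ha : ‖a‖ < 1) (hc : ‖c‖ < 1) (hw : ‖w‖ < 1) :
    1 - conj (phi a c) * phi a w =
      (1 - conj a * a) * (1 - conj c * w) / ((1 - a * conj c) * (1 - conj a * w)) := by
  have hd : (1 - a * conj c) * (1 - conj a * w) ≠ 0 := by
    refine mul_ne_zero ?_ (one_sub_conj_mul_ne_zero ha hw)
    simpa only [mul_comm] using one_sub_conj_mul_ne_zero hc ha
  simp only [phi, map_div₀, map_sub, map_one, map_mul, Complex.conj_conj]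
  rw [div_mul_div_comm, eq_div_iff hd, sub_mul, div_mul_cancel₀ _ hd]
  ring

lemma norm_phi_phi (ha : ‖a‖ < 1) (hc : ‖c‖ < 1) (hw : ‖w‖ < 1) :
    ‖phi (phi a c) (phi a w)‖ = ‖phi c w‖ := by
  have hac := norm_pos_iff.2 (one_sub_conj_mul_ne_zero ha hc)
  have haw := norm_pos_iff.2 (one_sub_conj_mul_ne_zero ha hw)
  have hcw := norm_pos_iff.2 (one_sub_conj_mul_ne_zero hc hw)
  have hsq : 1 - ‖phi (phi a c) (phi a w)‖ ^ 2 = 1 - ‖phi c w‖ ^ 2 := by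
    rw [one_sub_norm_phi_sq (one_sub_conj_mul_ne_zero (norm_phi_lt_one ha hc)
        (norm_phi_lt_one ha hw)), one_sub_norm_phi_sq (norm_pos_iff.1 hac),
      one_sub_norm_phi_sq (norm_pos_iff.1 haw), one_sub_norm_phi_sq (norm_pos_iff.1 hcw),
      one_sub_conj_phi_mul_phi ha hc hw, norm_div, norm_mul, norm_mul,
      norm_one_sub_conj_mul_self ha.le, mul_comm a (conj c), norm_one_sub_conj_mul_comm c a]
    have := one_sub_norm_sq_pos ha
    field_simp
  exact (sq_eq_sq₀ (norm_nonneg _) (norm_nonneg _)).1 (by linarith)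

lemma hasDerivAt_phi (h : 1 - conj a * z ≠ 0) :
    HasDerivAt (phi a) (-(1 - conj a * a) / (1 - conj a * z) ^ 2) z := by
  have hnum : HasDerivAt (fun z : ℂ => a - z) (-1) z := (hasDerivAt_id z).const_sub a
  have hden : HasDerivAt (fun z : ℂ => 1 - conj a * z) (-conj a) z := by
    simpa using ((hasDerivAt_id z).const_mul (conj a)).const_sub 1
  refine (hnum.div hden h).congr_deriv ?_
  ring

lemma measurable_phi (a : ℂ) : Measurable (phi a) := by
  unfold phi
  fun_prop

lemma bijOn_phi_ball (ha : ‖a‖ < 1) : BijOn (phi a) (ball 0 1) (ball 0 1) := by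
  have hmaps : MapsTo (phi a) (ball 0 1) (ball 0 1) := fun z hz =>
    mem_ball_zero_iff.2 (norm_phi_lt_one ha (mem_ball_zero_iff.1 hz))
  have hinv : LeftInvOn (phi a) (phi a) (ball 0 1) := fun z hz =>
    phi_phi ha (mem_ball_zero_iff.1 hz)
  exact InvOn.bijOn ⟨hinv, hinv⟩ hmaps hmaps

end Moebius

lemma abs_det_restrictScalars_toSpanSingleton (c : ℂ) :
    |((ContinuousLinearMap.toSpanSingleton ℂ c).restrictScalars ℝ : ℂ →L[ℝ] ℂ).det| =
      ‖c‖ ^ 2 := by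
  simp [ContinuousLinearMap.det, LinearMap.det_restrictScalars, Algebra.norm_complex_eq,
    Complex.normSq_eq_norm_sq]

lemma setLIntegral_image_eq_lintegral_enorm_deriv_sq_mul {S : Set ℂ} {f f' : ℂ → ℂ}
    (hS : MeasurableSet S) (hf : ∀ z ∈ S, HasDerivWithinAt f (f' z) S z) (hinj : InjOn f S)
    (u : ℂ → ℝ≥0∞) :
    ∫⁻ z in f '' S, u z ∂dA = ∫⁻ w in S, ‖f' w‖ₑ ^ 2 * u (f w) ∂dA := by
  have hcov := lintegral_image_eq_lintegral_abs_det_fderiv_mul volume hS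
    (fun z hz => ((hf z hz).hasFDerivWithinAt).restrictScalars ℝ) hinj u
  simp only [abs_det_restrictScalars_toSpanSingleton, ENNReal.ofReal_pow (norm_nonneg _),
    ofReal_norm] at hcov
  simp only [dA, Measure.restrict_smul, lintegral_smul_measure, hcov]

lemma lintegral_ball_comp_phi {a : ℂ} (ha : ‖a‖ < 1) (u : ℂ → ℝ≥0∞) :
    ∫⁻ w in ball 0 1, ‖deriv (phi a) w‖ₑ ^ 2 * u (phi a w) ∂dA = ∫⁻ z in ball 0 1, u z ∂dA := by
  have hbij := bijOn_phi_ball ha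
  rw [← setLIntegral_image_eq_lintegral_enorm_deriv_sq_mul measurableSet_ball (fun z hz => ?_)
    hbij.injOn u, hbij.image_eq]
  exact (hasDerivAt_phi (one_sub_conj_mul_ne_zero ha (mem_ball_zero_iff.1 hz))
    ).differentiableAt.hasDerivAt.hasDerivWithinAt

/-! ### The weighted `L²` norms defining `Q_s` -/

section Carleson

variable {s t : ℝ} {a c : ℂ} {u v f : ℂ → ℂ}

/-- The measure `(1 - |φ_a(z)|²)^s dA(z)` on the unit disc; the integrals defining `Q_s` are the
squares of the norms of `f'` in `L²(moebiusMeasure s a)`. -/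
def moebiusMeasure (s : ℝ) (a : ℂ) : Measure ℂ :=
  (dA.restrict (ball 0 1)).withDensity fun z => ENNReal.ofReal ((1 - ‖phi a z‖ ^ 2) ^ s)

/-- `IsCarleson s u` says that `|u|² (1 - |z|²)^s dA` is an `s`-Carleson measure, in the Möbius
invariant formulation; `f` holomorphic is in `Q_s` iff `f'` has this property. -/
def IsCarleson (s : ℝ) (u : ℂ → ℂ) : Prop :=
  ∃ C : ℝ≥0, ∀ a, ‖a‖ < 1 → eLpNorm u 2 (moebiusMeasure s a) ≤ C

lemma measurable_moebiusWeight (s : ℝ) (a : ℂ) :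
    Measurable fun z => ENNReal.ofReal ((1 - ‖phi a z‖ ^ 2) ^ s) := by
  have := measurable_phi a
  fun_prop

lemma lintegral_moebiusMeasure (s : ℝ) (a : ℂ) (F : ℂ → ℝ≥0∞) :
    ∫⁻ z, F z ∂moebiusMeasure s a =
      ∫⁻ z in ball 0 1, F z * ENNReal.ofReal ((1 - ‖phi a z‖ ^ 2) ^ s) ∂dA := by
  rw [moebiusMeasure, lintegral_withDensity_eq_lintegral_mul_non_measurable _
    (measurable_moebiusWeight s a) (ae_of_all _ fun _ => ENNReal.ofReal_lt_top)]
  simp only [Pi.mul_apply, mul_comm]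

lemma eLpNorm_two_sq {α E : Type*} [MeasurableSpace α] [NormedAddCommGroup E] (u : α → E)
    (μ : Measure α) : eLpNorm u 2 μ ^ 2 = ∫⁻ z, ‖u z‖ₑ ^ 2 ∂μ := by
  simpa using eLpNorm_nnreal_pow_eq_lintegral (f := u) (μ := μ) (p := 2) two_ne_zero

lemma eLpNorm_moebiusMeasure_sq (s : ℝ) (a : ℂ) (u : ℂ → ℂ) :
    eLpNorm u 2 (moebiusMeasure s a) ^ 2 =
      ∫⁻ z in ball 0 1, ENNReal.ofReal (‖u z‖ ^ 2 * (1 - ‖phi a z‖ ^ 2) ^ s) ∂dA := by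
  rw [eLpNorm_two_sq, lintegral_moebiusMeasure]
  refine lintegral_congr fun z => ?_
  rw [ENNReal.ofReal_mul (sq_nonneg _), ENNReal.ofReal_pow (norm_nonneg _), ofReal_norm]

lemma moebiusMeasure_absolutelyContinuous (s : ℝ) (a : ℂ) :
    moebiusMeasure s a ≪ dA.restrict (ball 0 1) :=
  withDensity_absolutelyContinuous _ _

lemma ae_moebiusMeasure_mem_ball (s : ℝ) (a : ℂ) : ∀ᵐ z ∂moebiusMeasure s a, z ∈ ball (0 : ℂ) 1 :=
  (moebiusMeasure_absolutelyContinuous s a).ae_le (ae_restrict_mem measurableSet_ball)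

lemma aestronglyMeasurable_moebiusMeasure (hu : ContinuousOn u (ball 0 1))
    (s : ℝ) (a : ℂ) : AEStronglyMeasurable u (moebiusMeasure s a) :=
  (hu.aestronglyMeasurable measurableSet_ball).mono_ac (moebiusMeasure_absolutelyContinuous s a)

lemma eLpNorm_moebiusMeasure_congr (h : EqOn u v (ball 0 1)) :
    eLpNorm u 2 (moebiusMeasure s a) = eLpNorm v 2 (moebiusMeasure s a) :=
  eLpNorm_congr_ae ((ae_moebiusMeasure_mem_ball s a).mono h)

lemma eLpNorm_moebiusMeasure_le_mul {B : ℝ≥0} (h : ∀ z ∈ ball (0 : ℂ) 1, ‖v z‖ ≤ B * ‖u z‖) :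
    eLpNorm v 2 (moebiusMeasure s a) ≤ B * eLpNorm u 2 (moebiusMeasure s a) := by
  refine eLpNorm_le_nnreal_smul_eLpNorm_of_ae_le_mul ?_ 2
  exact (ae_moebiusMeasure_mem_ball s a).mono fun z hz => by exact_mod_cast h z hz

lemma moebiusMeasure_anti (ha : ‖a‖ < 1) (hst : s ≤ t) :
    moebiusMeasure t a ≤ moebiusMeasure s a := by
  refine withDensity_mono ((ae_restrict_mem measurableSet_ball).mono fun z hz => ?_)
  refine ENNReal.ofReal_le_ofReal (Real.rpow_le_rpow_of_exponent_ge ?_ ?_ hst)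
  · exact one_sub_norm_phi_sq_pos ha (mem_ball_zero_iff.1 hz)
  · linarith [sq_nonneg ‖phi a z‖]

lemma eLpNorm_comp_phi_mul_deriv (ha : ‖a‖ < 1) (hc : ‖c‖ < 1) (u : ℂ → ℂ) (s : ℝ) :
    eLpNorm (fun w => u (phi a w) * deriv (phi a) w) 2 (moebiusMeasure s c) =
      eLpNorm u 2 (moebiusMeasure s (phi a c)) := by
  refine (ENNReal.pow_right_strictMono two_ne_zero).injective ?_
  simp only [eLpNorm_two_sq, lintegral_moebiusMeasure]
  rw [← lintegral_ball_comp_phi ha fun z => ‖u z‖ₑ ^ 2 * _]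
  refine setLIntegral_congr_fun measurableSet_ball fun w hw => ?_
  simp only [norm_phi_phi ha hc (mem_ball_zero_iff.1 hw), enorm_mul, mul_pow]
  ring

namespace IsCarleson

lemma of_norm_le {B : ℝ≥0} (hu : IsCarleson s u) (h : ∀ z ∈ ball (0 : ℂ) 1, ‖v z‖ ≤ B * ‖u z‖) :
    IsCarleson s v := by
  obtain ⟨C, hC⟩ := hu
  refine ⟨B * C, fun a ha => (eLpNorm_moebiusMeasure_le_mul h).trans ?_⟩
  rw [ENNReal.coe_mul]
  gcongr
  exact hC a ha

lemma congr (hu : IsCarleson s u) (h : EqOn u v (ball 0 1)) : IsCarleson s v :=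
  hu.of_norm_le (B := 1) fun z hz => by simp [h hz]

lemma mono_exponent (hu : IsCarleson s u) (hst : s ≤ t) : IsCarleson t u := by
  obtain ⟨C, hC⟩ := hu
  exact ⟨C, fun a ha => (eLpNorm_mono_measure u (moebiusMeasure_anti ha hst)).trans (hC a ha)⟩

lemma add (hu : IsCarleson s u) (hv : IsCarleson s v) (hcu : ContinuousOn u (ball 0 1))
    (hcv : ContinuousOn v (ball 0 1)) : IsCarleson s (u + v) := by
  obtain ⟨C, hC⟩ := hu
  obtain ⟨D, hD⟩ := hv
  refine ⟨C + D, fun a ha => ?_⟩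
  rw [ENNReal.coe_add]
  exact (eLpNorm_add_le (aestronglyMeasurable_moebiusMeasure hcu s a)
    (aestronglyMeasurable_moebiusMeasure hcv s a) one_le_two).trans
    (add_le_add (hC a ha) (hD a ha))

lemma sub (hu : IsCarleson s u) (hv : IsCarleson s v) (hcu : ContinuousOn u (ball 0 1))
    (hcv : ContinuousOn v (ball 0 1)) : IsCarleson s (u - v) := by
  rw [sub_eq_add_neg]
  exact hu.add (hv.of_norm_le (B := 1) fun z _ => by simp) hcu hcv.neg

end IsCarleson

lemma biSup_sq_lt_top_iff {ι : Type*} {S : Set ι} {F : ι → ℝ≥0∞} :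
    ⨆ a ∈ S, F a ^ 2 < ⊤ ↔ ∃ C : ℝ≥0, ∀ a ∈ S, F a ≤ C := by
  constructor
  · intro h
    refine ⟨NNReal.sqrt (⨆ a ∈ S, F a ^ 2).toNNReal, fun a ha => ?_⟩
    rw [← ENNReal.pow_le_pow_left_iff two_ne_zero, ← ENNReal.coe_pow, NNReal.sq_sqrt,
      ENNReal.coe_toNNReal h.ne]
    exact le_iSup₂ (f := fun a (_ : a ∈ S) => F a ^ 2) a ha
  · rintro ⟨C, hC⟩
    refine (iSup₂_le fun a ha => ?_).trans_lt (ENNReal.coe_lt_top (r := C ^ 2))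
    rw [ENNReal.coe_pow]
    gcongr
    exact hC a ha

lemma mem_Qs_iff : f ∈ Qs s ↔ HolOn f ∧ IsCarleson s (deriv f) := by
  refine and_congr_right fun _ => ?_
  simp only [← eLpNorm_moebiusMeasure_sq]
  rw [biSup_sq_lt_top_iff]
  simp only [mem_ball_zero_iff, IsCarleson]

lemma mem_QsLog_iff {α : ℝ} : f ∈ QsLog s α ↔ HolOn f ∧ ∃ C : ℝ≥0, ∀ a, ‖a‖ < 1 →
    ENNReal.ofReal (Real.log (2 / (1 - ‖a‖)) ^ α) *
      eLpNorm (deriv f) 2 (moebiusMeasure s a) ≤ C := by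
  have hlog : ∀ a ∈ ball (0 : ℂ) 1,
      ENNReal.ofReal (Real.log (2 / (1 - ‖a‖)) ^ (2 * α)) =
        ENNReal.ofReal (Real.log (2 / (1 - ‖a‖)) ^ α) ^ 2 := by
    intro a ha
    rw [mem_ball_zero_iff] at ha
    have h0 : 0 ≤ Real.log (2 / (1 - ‖a‖)) :=
      Real.log_nonneg ((one_le_div (sub_pos.2 ha)).2 (by linarith [norm_nonneg a]))
    rw [← ENNReal.ofReal_pow (Real.rpow_nonneg h0 α), ← Real.rpow_mul_natCast h0, mul_comm]
    norm_num
  refine and_congr_right fun _ => ?_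
  rw [biSup_congr fun a ha => by rw [hlog a ha, ← eLpNorm_moebiusMeasure_sq, ← mul_pow],
    biSup_sq_lt_top_iff]
  simp only [mem_ball_zero_iff]

end Carleson

/-! ### Holomorphic functions on the disc -/

lemma HolOn.continuousOn {f : ℂ → ℂ} (hf : HolOn f) : ContinuousOn f (ball 0 1) :=
  DifferentiableOn.continuousOn hf

lemma HolOn.deriv {f : ℂ → ℂ} (hf : HolOn f) : HolOn (deriv f) :=
  DifferentiableOn.deriv hf isOpen_ball

lemma HolOn.hasDerivAt {f : ℂ → ℂ} (hf : HolOn f) {z : ℂ} (hz : ‖z‖ < 1) :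
    HasDerivAt f (_root_.deriv f z) z :=
  (DifferentiableOn.differentiableAt hf
    (isOpen_ball.mem_nhds (mem_ball_zero_iff.2 hz))).hasDerivAt

section SubMeanValue

variable {E : Type*} [NormedAddCommGroup E] [NormedSpace ℂ E] [CompleteSpace E] {f : ℂ → E}
  {z : ℂ} {r : ℝ}

lemma two_pi_mul_enorm_le_lintegral_circleMap (hf : DiffContOnCl ℂ f (ball z |r|)) :
    ENNReal.ofReal (2 * π) * ‖f z‖ₑ ≤ ∫⁻ θ in Ioc 0 (2 * π), ‖f (circleMap z r θ)‖ₑ := by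
  have havg : ∫ θ in Ioc 0 (2 * π), f (circleMap z r θ) = (2 * π) • f z := by
    rw [← hf.circleAverage, Real.circleAverage_def, smul_inv_smul₀ two_pi_pos.ne',
      intervalIntegral.integral_of_le two_pi_pos.le]
  calc ENNReal.ofReal (2 * π) * ‖f z‖ₑ = ‖(2 * π) • f z‖ₑ := by
        rw [enorm_smul, Real.enorm_of_nonneg two_pi_pos.le]
    _ ≤ ∫⁻ θ in Ioc 0 (2 * π), ‖f (circleMap z r θ)‖ₑ := by
        rw [← havg]
        exact enorm_integral_le_lintegral_enorm _

lemma setLIntegral_ball_rotate (F : ℂ → ℝ≥0∞) (z : ℂ) (r θ : ℝ) :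
    ∫⁻ w in ball 0 r, F (z + w * circleMap 0 1 θ) = ∫⁻ w in ball z r, F w := by
  have hmp : MeasurePreserving (fun w : ℂ => z + w * circleMap 0 1 θ) := by
    have hrot : (fun w : ℂ => w * circleMap 0 1 θ) = rotation (Circle.exp θ) :=
      funext fun w => by simp [mul_comm, circleMap]
    exact (measurePreserving_add_left volume z).comp
      (hrot ▸ (rotation (Circle.exp θ)).measurePreserving)
  have hemb : MeasurableEmbedding fun w : ℂ => z + w * circleMap 0 1 θ :=
    ((MeasurableEquiv.addLeft z).measurableEmbedding).comp
      (MeasurableEquiv.mulRight₀ _ (circleMap_ne_center one_ne_zero)).measurableEmbedding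
  have hball : (fun w : ℂ => z + w * circleMap 0 1 θ) ⁻¹' ball z r = ball 0 r := by
    ext w
    simp
  rw [← hball, hmp.setLIntegral_comp_preimage_emb hemb]

lemma add_mul_mem_ball {w ζ : ℂ} (hw : w ∈ ball 0 r) (hζ : ‖ζ‖ ≤ 1) :
    z + w * ζ ∈ ball z r := by
  rw [mem_ball_zero_iff] at hw
  simpa using (mul_le_of_le_one_right (norm_nonneg w) hζ).trans_lt hw

lemma two_pi_mul_enorm_le_lintegral_rotate {w : ℂ} (hf : DifferentiableOn ℂ f (ball z r))
    (hw : w ∈ ball 0 r) :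
    ENNReal.ofReal (2 * π) * ‖f z‖ₑ ≤ ∫⁻ θ in Ioc 0 (2 * π), ‖f (z + w * circleMap 0 1 θ)‖ₑ := by
  have hd : DifferentiableOn ℂ (fun ζ => f (z + w * ζ)) (closure (ball 0 |1|)) := by
    rw [abs_one, closure_ball _ one_ne_zero]
    exact hf.comp (by fun_prop) fun ζ hζ => add_mul_mem_ball hw (mem_closedBall_zero_iff.1 hζ)
  simpa using two_pi_mul_enorm_le_lintegral_circleMap hd.diffContOnCl

-- Averaging `‖f‖` over the rotations of the disc reduces the claim to circles.
lemma volume_ball_mul_enorm_le (hf : DifferentiableOn ℂ f (ball z r)) :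
    volume (ball z r) * ‖f z‖ₑ ≤ ∫⁻ w in ball z r, ‖f w‖ₑ := by
  have hmeas : AEMeasurable (fun p : ℂ × ℝ => ‖f (z + p.1 * circleMap 0 1 p.2)‖ₑ)
      ((volume.restrict (ball 0 r)).prod (volume.restrict (Ioc 0 (2 * π)))) := by
    rw [Measure.prod_restrict]
    exact ((hf.continuousOn.comp (by unfold circleMap; fun_prop) fun p hp =>
      add_mul_mem_ball hp.1 (by simp)).aestronglyMeasurable
        (measurableSet_ball.prod measurableSet_Ioc)).enorm
  have h2π : ENNReal.ofReal (2 * π) ≠ 0 := (ENNReal.ofReal_pos.2 two_pi_pos).ne'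
  rw [← ENNReal.mul_le_mul_iff_right h2π ENNReal.ofReal_ne_top]
  calc ENNReal.ofReal (2 * π) * (volume (ball z r) * ‖f z‖ₑ)
      = ∫⁻ _ in ball (0 : ℂ) r, ENNReal.ofReal (2 * π) * ‖f z‖ₑ := by
        rw [setLIntegral_const, Complex.volume_ball, Complex.volume_ball]
        ring
    _ ≤ ∫⁻ w in ball 0 r, ∫⁻ θ in Ioc 0 (2 * π), ‖f (z + w * circleMap 0 1 θ)‖ₑ :=
        setLIntegral_mono' measurableSet_ball fun w => two_pi_mul_enorm_le_lintegral_rotate hf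
    _ = ENNReal.ofReal (2 * π) * ∫⁻ w in ball z r, ‖f w‖ₑ := by
        rw [lintegral_lintegral_swap hmeas]
        simp only [setLIntegral_ball_rotate (fun w => ‖f w‖ₑ), lintegral_const, mul_comm,
          Measure.restrict_apply_univ, Real.volume_Ioc, sub_zero]

lemma ofReal_sq_mul_enorm_le (hf : DifferentiableOn ℂ f (ball z r)) :
    ENNReal.ofReal r ^ 2 * ‖f z‖ₑ ≤ ∫⁻ w in ball z r, ‖f w‖ₑ ∂dA := by
  have hπ : ENNReal.ofReal π ≠ 0 := (ENNReal.ofReal_pos.2 pi_pos).ne'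
  have hvol : volume (ball z r) = ENNReal.ofReal π * ENNReal.ofReal r ^ 2 := by
    rw [Complex.volume_ball, mul_comm, ← ENNReal.ofReal_coe_nnreal, NNReal.coe_real_pi]
  rw [dA, Measure.restrict_smul, lintegral_smul_measure, smul_eq_mul,
    ← ENNReal.mul_le_iff_le_inv hπ ENNReal.ofReal_ne_top, ← mul_assoc, ← hvol]
  exact volume_ball_mul_enorm_le hf

end SubMeanValue

section Growth

variable {f g h u : ℂ → ℂ} {z w : ℂ} {s : ℝ}

lemma norm_one_sub_conj_mul_le_of_norm_sub_le (hz : ‖z‖ < 1) (hw : ‖w - z‖ ≤ (1 - ‖z‖) / 2) :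
    ‖1 - conj z * w‖ ≤ 5 / 2 * (1 - ‖z‖) := by
  have hsplit : 1 - conj z * w = (1 - conj z * z) - conj z * (w - z) := by ring
  calc ‖1 - conj z * w‖ ≤ ‖1 - conj z * z‖ + ‖conj z * (w - z)‖ := hsplit ▸ norm_sub_le _ _
    _ = (1 - ‖z‖ ^ 2) + ‖z‖ * ‖w - z‖ := by
        rw [norm_one_sub_conj_mul_self hz.le, norm_mul, RCLike.norm_conj]
    _ ≤ 5 / 2 * (1 - ‖z‖) := by nlinarith [norm_nonneg z, norm_nonneg (w - z)]

lemma norm_lt_one_of_norm_sub_le (hz : ‖z‖ < 1) (hw : ‖w - z‖ ≤ (1 - ‖z‖) / 2) : ‖w‖ < 1 := by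
  linarith [norm_le_norm_add_norm_sub' w z]

lemma one_sub_norm_phi_sq_ge_of_norm_sub_le (hz : ‖z‖ < 1) (hw : ‖w - z‖ ≤ (1 - ‖z‖) / 2) :
    1 / 16 ≤ 1 - ‖phi z w‖ ^ 2 := by
  have hne := one_sub_conj_mul_ne_zero hz (norm_lt_one_of_norm_sub_le hz hw)
  have hden : ‖1 - conj z * w‖ ^ 2 ≤ (5 / 2 * (1 - ‖z‖)) ^ 2 := by
    gcongr
    exact norm_one_sub_conj_mul_le_of_norm_sub_le hz hw
  have hw' : (1 - ‖z‖) / 2 ≤ 1 - ‖w‖ ^ 2 := by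
    nlinarith [norm_le_norm_add_norm_sub' w z, norm_nonneg w, norm_nonneg z]
  have hnum : (1 - ‖z‖) * ((1 - ‖z‖) / 2) ≤ (1 - ‖z‖ ^ 2) * (1 - ‖w‖ ^ 2) := by
    gcongr
    · nlinarith [norm_nonneg z]
    · nlinarith [norm_nonneg z]
  rw [one_sub_norm_phi_sq hne, le_div_iff₀ (pow_pos (norm_pos_iff.2 hne) 2)]
  nlinarith [sq_nonneg (1 - ‖z‖)]

lemma setLIntegral_ball_le_lintegral_moebiusMeasure (hs : 0 ≤ s) (hz : ‖z‖ < 1) (F : ℂ → ℝ≥0∞) :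
    ∫⁻ w in ball z ((1 - ‖z‖) / 2), F w ∂dA ≤
      ENNReal.ofReal (16 ^ s) * ∫⁻ w, F w ∂moebiusMeasure s z := by
  have hnear : ∀ w ∈ ball z ((1 - ‖z‖) / 2), ‖w - z‖ ≤ (1 - ‖z‖) / 2 := fun w hw =>
    (mem_ball_iff_norm.1 hw).le
  have hweight : ∀ w ∈ ball z ((1 - ‖z‖) / 2),
      1 ≤ ENNReal.ofReal (16 ^ s) * ENNReal.ofReal ((1 - ‖phi z w‖ ^ 2) ^ s) := by
    intro w hw
    have hphi := one_sub_norm_phi_sq_ge_of_norm_sub_le hz (hnear w hw)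
    rw [← ENNReal.ofReal_mul (by positivity), ← Real.mul_rpow (by norm_num) (by linarith),
      ENNReal.one_le_ofReal]
    exact Real.one_le_rpow (by linarith) hs
  rw [lintegral_moebiusMeasure, ← lintegral_const_mul' _ _ ENNReal.ofReal_ne_top]
  calc ∫⁻ w in ball z ((1 - ‖z‖) / 2), F w ∂dA
      ≤ ∫⁻ w in ball z ((1 - ‖z‖) / 2),
          ENNReal.ofReal (16 ^ s) * (F w * ENNReal.ofReal ((1 - ‖phi z w‖ ^ 2) ^ s)) ∂dA := by
        refine setLIntegral_mono' measurableSet_ball fun w hw => ?_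
        rw [mul_left_comm]
        exact le_mul_of_one_le_right' (hweight w hw)
    _ ≤ _ := lintegral_mono_set fun w hw =>
        mem_ball_zero_iff.2 (norm_lt_one_of_norm_sub_le hz (hnear w hw))

lemma one_sub_norm_mul_norm_le_of_eLpNorm_le (hu : HolOn u) (hs : 0 ≤ s) (hz : ‖z‖ < 1) {C : ℝ≥0}
    (hC : eLpNorm u 2 (moebiusMeasure s z) ≤ C) : (1 - ‖z‖) * ‖u z‖ ≤ 2 * 4 ^ s * C := by
  have hr : 0 ≤ (1 - ‖z‖) / 2 := by linarith
  have hsub : ball z ((1 - ‖z‖) / 2) ⊆ ball 0 1 := fun w hw =>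
    mem_ball_zero_iff.2 (norm_lt_one_of_norm_sub_le hz (mem_ball_iff_norm.1 hw).le)
  have hmean : ENNReal.ofReal ((1 - ‖z‖) / 2) ^ 2 * ‖u z‖ₑ ^ 2 ≤
      ENNReal.ofReal (16 ^ s) * (C : ℝ≥0∞) ^ 2 := by
    calc ENNReal.ofReal ((1 - ‖z‖) / 2) ^ 2 * ‖u z‖ₑ ^ 2
        ≤ ∫⁻ w in ball z ((1 - ‖z‖) / 2), ‖u w‖ₑ ^ 2 ∂dA := by
          simpa only [Pi.pow_apply, enorm_pow] using
            ofReal_sq_mul_enorm_le ((DifferentiableOn.pow hu 2).mono hsub)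
      _ ≤ ENNReal.ofReal (16 ^ s) * eLpNorm u 2 (moebiusMeasure s z) ^ 2 := by
          rw [eLpNorm_two_sq]
          exact setLIntegral_ball_le_lintegral_moebiusMeasure hs hz _
      _ ≤ ENNReal.ofReal (16 ^ s) * (C : ℝ≥0∞) ^ 2 := by gcongr
  have hreal : ((1 - ‖z‖) / 2 * ‖u z‖) ^ 2 ≤ (4 ^ s * C) ^ 2 := by
    have h16 : (16 : ℝ) ^ s = (4 ^ s) ^ 2 := by
      rw [← Real.rpow_natCast, ← Real.rpow_mul (by norm_num), mul_comm, Real.rpow_mul (by norm_num)]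
      norm_num
    rw [← ofReal_norm, ← ENNReal.ofReal_coe_nnreal, ← ENNReal.ofReal_pow hr,
      ← ENNReal.ofReal_pow (norm_nonneg _), ← ENNReal.ofReal_pow C.coe_nonneg,
      ← ENNReal.ofReal_mul (by positivity), ← ENNReal.ofReal_mul (by positivity),
      ENNReal.ofReal_le_ofReal_iff (by positivity), h16] at hmean
    simpa only [mul_pow] using hmean
  have := (sq_le_sq₀ (by positivity) (by positivity)).1 hreal
  linarith

lemma norm_ofReal_mul_lt_one {t : ℝ} (ht : t ∈ Icc (0 : ℝ) 1) (hz : ‖z‖ < 1) :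
    ‖(t : ℂ) * z‖ < 1 := by
  rw [norm_mul, Complex.norm_of_nonneg ht.1]
  exact (mul_le_of_le_one_left (norm_nonneg z) ht.2).trans_lt hz

lemma hasDerivAt_comp_ofReal_mul {f' : ℂ} {t : ℝ} (hf : HasDerivAt f f' (t * z)) :
    HasDerivAt (fun t : ℝ => f (t * z)) (f' * z) t :=
  HasDerivAt.comp_ofReal (e := fun ζ => f (ζ * z))
    (by simpa [Function.comp_def] using hf.comp (t : ℂ) ((hasDerivAt_id (t : ℂ)).mul_const z))

lemma norm_sub_le_mul_log_of_one_sub_norm_mul_norm_deriv_le (hf : HolOn f) {B : ℝ}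
    (hB : ∀ z, ‖z‖ < 1 → (1 - ‖z‖) * ‖deriv f z‖ ≤ B) (hz : ‖z‖ < 1) :
    ‖f z - f 0‖ ≤ B * Real.log (1 / (1 - ‖z‖)) := by
  have hlt : ∀ t ∈ Icc (0 : ℝ) 1, 0 < 1 - t * ‖z‖ := fun t ht => by
    nlinarith [norm_nonneg z, ht.2]
  have hray : ∀ t ∈ Icc (0 : ℝ) 1,
      HasDerivAt (fun t : ℝ => f (t * z) - f 0) (deriv f (t * z) * z) t := fun t ht =>
    (hasDerivAt_comp_ofReal_mul (hf.hasDerivAt (norm_ofReal_mul_lt_one ht hz))).sub_const _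
  have hlog : ∀ t ∈ Icc (0 : ℝ) 1, HasDerivAt (fun t => B * (-Real.log (1 - t * ‖z‖)))
      (B * (‖z‖ / (1 - t * ‖z‖))) t := by
    intro t ht
    have hlin : HasDerivAt (fun t : ℝ => 1 - t * ‖z‖) (-‖z‖) t := by
      simpa using ((hasDerivAt_id t).mul_const ‖z‖).const_sub 1
    refine ((hlin.log (hlt t ht).ne').neg.const_mul B).congr_deriv ?_
    rw [neg_div, neg_neg]
  have hcmp := image_norm_le_of_norm_deriv_right_le_deriv_boundary'
    (fun t ht => (hray t ht).continuousAt.continuousWithinAt)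
    (fun t ht => (hray t (Ico_subset_Icc_self ht)).hasDerivWithinAt) (by simp)
    (fun t ht => (hlog t ht).continuousAt.continuousWithinAt)
    (fun t ht => (hlog t (Ico_subset_Icc_self ht)).hasDerivWithinAt)
    (fun t ht => by
      have ht' := Ico_subset_Icc_self ht
      have hBt := hB _ (norm_ofReal_mul_lt_one ht' hz)
      rw [norm_mul (t : ℂ), Complex.norm_of_nonneg ht'.1] at hBt
      rw [norm_mul, ← mul_div_assoc, le_div_iff₀ (hlt t ht')]
      nlinarith [norm_nonneg z])
    (right_mem_Icc.2 zero_le_one)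
  simpa using hcmp

lemma hasDerivAt_mul_integral_ray (hh : HolOn h) (hz : ‖z‖ < 1) :
    HasDerivAt (fun z => z * ∫ t in (0 : ℝ)..1, h (t * z)) (h z) z := by
  obtain ⟨P, hP⟩ := DifferentiableOn.isExactOn_ball hh
  have hprim : ∀ z ∈ ball (0 : ℂ) 1, z * ∫ t in (0 : ℝ)..1, h (t * z) = P z - P 0 := by
    intro z hz
    have hmem : ∀ t ∈ uIcc (0 : ℝ) 1, (t : ℂ) * z ∈ ball 0 1 := fun t ht => by
      rw [uIcc_of_le zero_le_one] at ht
      exact mem_ball_zero_iff.2 (norm_ofReal_mul_lt_one ht (mem_ball_zero_iff.1 hz))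
    have hftc := intervalIntegral.integral_eq_sub_of_hasDerivAt
      (fun t ht => hasDerivAt_comp_ofReal_mul (hP _ (hmem t ht)))
      ((hh.continuousOn.comp (by fun_prop) hmem).mul continuousOn_const).intervalIntegrable
    simpa [intervalIntegral.integral_mul_const, mul_comm z] using hftc
  have hz' := mem_ball_zero_iff.2 hz
  exact ((hP z hz').sub_const (P 0)).congr_of_eventuallyEq
    (eventually_of_mem (isOpen_ball.mem_nhds hz') hprim)

lemma holOn_of_hasDerivAt {f' : ℂ → ℂ} (hf : ∀ z, ‖z‖ < 1 → HasDerivAt f (f' z) z) : HolOn f :=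
  fun z hz => (hf z (mem_ball_zero_iff.1 hz)).differentiableAt.differentiableWithinAt

lemma hasDerivAt_Tg (hg : HolOn g) (hf : HolOn f) (hz : ‖z‖ < 1) :
    HasDerivAt (Tg g f) (deriv g z * f z) z :=
  hasDerivAt_mul_integral_ray (h := fun z => deriv g z * f z) (DifferentiableOn.mul hg.deriv hf) hz

lemma hasDerivAt_Ig (hg : HolOn g) (hf : HolOn f) (hz : ‖z‖ < 1) :
    HasDerivAt (Ig g f) (g z * deriv f z) z :=
  hasDerivAt_mul_integral_ray (h := fun z => g z * deriv f z) (DifferentiableOn.mul hg hf.deriv) hz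

lemma hasDerivAt_Mg (hg : HolOn g) (hf : HolOn f) (hz : ‖z‖ < 1) :
    HasDerivAt (Mg g f) (deriv g z * f z + g z * deriv f z) z :=
  (hg.hasDerivAt hz).mul (hf.hasDerivAt hz)

-- Only the derivative enters the definition of `Q_s`: the value at the origin is irrelevant.
lemma mem_Qs_iff_of_hasDerivAt {f' : ℂ → ℂ} (hf : ∀ z, ‖z‖ < 1 → HasDerivAt f (f' z) z) :
    f ∈ Qs s ↔ IsCarleson s f' := by
  have hderiv : EqOn (deriv f) f' (ball 0 1) := fun z hz => (hf z (mem_ball_zero_iff.1 hz)).deriv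
  rw [mem_Qs_iff, and_iff_right (holOn_of_hasDerivAt hf)]
  exact ⟨fun h => h.congr hderiv, fun h => h.congr hderiv.symm⟩

end Growth

/-! ### The logarithmic embedding -/

section Embedding

variable {F v : ℂ → ℂ} {a w z ζ : ℂ} {s δ : ℝ}

/-- The weight `1 + log² ((1 - r) / δ)`. The reciprocal of `(1 - r) * radialWeight δ r` is the
derivative of `-arctan (log ((1 - r) / δ))`, so that its integral over `(0, 1)` is bounded
uniformly in `δ`. -/
def radialWeight (δ r : ℝ) : ℝ := 1 + Real.log ((1 - r) / δ) ^ 2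

lemma radialWeight_pos (δ r : ℝ) : 0 < radialWeight δ r := by
  unfold radialWeight
  positivity

lemma measurable_radialWeight (δ : ℝ) : Measurable (radialWeight δ) := by
  unfold radialWeight
  fun_prop

lemma sq_lintegral_le_lintegral_sq_mul_mul_lintegral_inv {α : Type*} [MeasurableSpace α]
    {μ : Measure α} {f W : α → ℝ≥0∞} (hf : AEMeasurable f μ) (hW : AEMeasurable W μ)
    (h0 : ∀ᵐ x ∂μ, W x ≠ 0) (htop : ∀ᵐ x ∂μ, W x ≠ ⊤) :
    (∫⁻ x, f x ∂μ) ^ 2 ≤ (∫⁻ x, f x ^ 2 * W x ∂μ) * ∫⁻ x, (W x)⁻¹ ∂μ := by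
  have hfactor : ∀ᵐ x ∂μ, f x = (f x * W x ^ (1 / 2 : ℝ)) * (W x)⁻¹ ^ (1 / 2 : ℝ) := by
    filter_upwards [h0, htop] with x hx0 hxtop
    rw [mul_assoc, ← ENNReal.mul_rpow_of_nonneg _ _ (by norm_num),
      ENNReal.mul_inv_cancel hx0 hxtop, ENNReal.one_rpow, mul_one]
  have hsqrt : ∀ x : ℝ≥0∞, (x ^ (1 / 2 : ℝ)) ^ 2 = x := fun x => by
    rw [← ENNReal.rpow_mul_natCast]
    norm_num
  have hholder := ENNReal.lintegral_mul_le_Lp_mul_Lq μ Real.HolderConjugate.two_two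
    (hf.mul (hW.pow_const (1 / 2 : ℝ))) (hW.inv.pow_const (1 / 2 : ℝ))
  calc (∫⁻ x, f x ∂μ) ^ 2
      ≤ ((∫⁻ x, (f x * W x ^ (1 / 2 : ℝ)) ^ (2 : ℝ) ∂μ) ^ (1 / 2 : ℝ) *
          (∫⁻ x, ((W x)⁻¹ ^ (1 / 2 : ℝ)) ^ (2 : ℝ) ∂μ) ^ (1 / 2 : ℝ)) ^ 2 := by
        rw [lintegral_congr_ae hfactor]
        gcongr
        exact hholder
    _ = (∫⁻ x, f x ^ 2 * W x ∂μ) * ∫⁻ x, (W x)⁻¹ ∂μ := by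
        simp only [ENNReal.rpow_two, mul_pow, hsqrt]

lemma enorm_sub_le_lintegral_ray (hF : HolOn F) (hζ : ‖ζ‖ < 1) :
    ‖F ζ - F 0‖ₑ ≤ ‖ζ‖ₑ * ∫⁻ t in Ioc (0 : ℝ) 1, ‖deriv F (t * ζ)‖ₑ := by
  have hlt : ∀ t ∈ uIcc (0 : ℝ) 1, ‖(t : ℂ) * ζ‖ < 1 := fun t ht =>
    norm_ofReal_mul_lt_one (uIcc_of_le (zero_le_one (α := ℝ)) ▸ ht) hζ
  have hftc : ∫ t in (0 : ℝ)..1, deriv F (t * ζ) * ζ = F ζ - F 0 := by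
    have := intervalIntegral.integral_eq_sub_of_hasDerivAt
      (fun t ht => hasDerivAt_comp_ofReal_mul (hF.hasDerivAt (hlt t ht)))
      ((hF.deriv.continuousOn.comp (by fun_prop)
        fun t ht => mem_ball_zero_iff.2 (hlt t ht)).mul continuousOn_const).intervalIntegrable
    simpa only [ofReal_one, one_mul, ofReal_zero, zero_mul] using this
  rw [← hftc, intervalIntegral.integral_mul_const, enorm_mul, mul_comm,
    intervalIntegral.integral_of_le zero_le_one]
  gcongr
  exact enorm_integral_le_lintegral_enorm _

lemma one_sub_mul_radialWeight_pos {x t : ℝ} (hx : x < 1) (hx0 : 0 ≤ x) (ht : t ∈ Icc (0 : ℝ) 1) :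
    0 < (1 - t * x) * radialWeight δ (t * x) :=
  mul_pos (by nlinarith [ht.2]) (radialWeight_pos _ _)

lemma hasDerivAt_arctan_log_ray {x t : ℝ} (hδ : 0 < δ) (h : 0 < 1 - t * x) :
    HasDerivAt (fun t => -Real.arctan (Real.log ((1 - t * x) / δ)))
      (x * ((1 - t * x) * radialWeight δ (t * x))⁻¹) t := by
  have hlin : HasDerivAt (fun t : ℝ => (1 - t * x) / δ) (-x / δ) t := by
    simpa using (((hasDerivAt_id t).mul_const x).const_sub 1).div_const δ
  refine (hlin.log (div_pos h hδ).ne').arctan.neg.congr_deriv ?_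
  rw [radialWeight]
  field_simp

lemma ofReal_mul_lintegral_inv_radialWeight_le {x : ℝ} (hδ : 0 < δ) (hx0 : 0 ≤ x) (hx : x < 1) :
    ENNReal.ofReal x * ∫⁻ t in Ioc (0 : ℝ) 1,
      (ENNReal.ofReal ((1 - t * x) * radialWeight δ (t * x)))⁻¹ ≤ ENNReal.ofReal π := by
  have hlt : ∀ t ∈ Icc (0 : ℝ) 1, 0 < 1 - t * x := fun t ht => by nlinarith [ht.2]
  have hW : ∀ t ∈ Icc (0 : ℝ) 1, 0 < (1 - t * x) * radialWeight δ (t * x) := fun t ht =>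
    one_sub_mul_radialWeight_pos hx hx0 ht
  have hcont : ContinuousOn (fun t => x * ((1 - t * x) * radialWeight δ (t * x))⁻¹)
      (Icc (0 : ℝ) 1) := by
    refine continuousOn_const.mul (ContinuousOn.inv₀ ?_ fun t ht => (hW t ht).ne')
    have hlog : ContinuousOn (fun t => Real.log ((1 - t * x) / δ)) (Icc (0 : ℝ) 1) :=
      ContinuousOn.log (by fun_prop) fun t ht => (div_pos (hlt t ht) hδ).ne'
    unfold radialWeight
    fun_prop
  have hint : ∫ t in (0 : ℝ)..1, x * ((1 - t * x) * radialWeight δ (t * x))⁻¹ ≤ π := by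
    rw [intervalIntegral.integral_eq_sub_of_hasDerivAt
      (fun t ht => hasDerivAt_arctan_log_ray hδ (hlt t (uIcc_of_le (zero_le_one (α := ℝ)) ▸ ht)))
      (by rw [← uIcc_of_le (zero_le_one (α := ℝ))] at hcont; exact hcont.intervalIntegrable)]
    linarith [Real.arctan_lt_pi_div_two (Real.log ((1 - 0 * x) / δ)),
      Real.neg_pi_div_two_lt_arctan (Real.log ((1 - 1 * x) / δ))]
  rw [← lintegral_const_mul' _ _ ENNReal.ofReal_ne_top]
  calc ∫⁻ t in Ioc (0 : ℝ) 1,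
        ENNReal.ofReal x * (ENNReal.ofReal ((1 - t * x) * radialWeight δ (t * x)))⁻¹
      = ∫⁻ t in Ioc (0 : ℝ) 1, ENNReal.ofReal (x * ((1 - t * x) * radialWeight δ (t * x))⁻¹) := by
        refine setLIntegral_congr_fun measurableSet_Ioc fun t ht => ?_
        simp only [ENNReal.ofReal_mul hx0,
          ENNReal.ofReal_inv_of_pos (hW t (Ioc_subset_Icc_self ht))]
    _ = ENNReal.ofReal (∫ t in (0 : ℝ)..1, x * ((1 - t * x) * radialWeight δ (t * x))⁻¹) := by
        rw [intervalIntegral.integral_of_le zero_le_one,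
          ofReal_integral_eq_lintegral_ofReal (hcont.integrableOn_Icc.mono_set Ioc_subset_Icc_self)]
        exact (ae_restrict_mem measurableSet_Ioc).mono fun t ht =>
          mul_nonneg hx0 (inv_nonneg.2 (hW t (Ioc_subset_Icc_self ht)).le)
    _ ≤ ENNReal.ofReal π := ENNReal.ofReal_le_ofReal hint

lemma enorm_sub_sq_le_lintegral_ray (hF : HolOn F) (hδ : 0 < δ) (hζ : ‖ζ‖ < 1) :
    ‖F ζ - F 0‖ₑ ^ 2 ≤ ENNReal.ofReal π * (‖ζ‖ₑ * ∫⁻ t in Ioc (0 : ℝ) 1,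
      ‖deriv F (t * ζ)‖ₑ ^ 2 * ENNReal.ofReal ((1 - t * ‖ζ‖) * radialWeight δ (t * ‖ζ‖))) := by
  have hmeas := measurable_radialWeight δ
  have hderiv : ContinuousOn (fun t : ℝ => deriv F (t * ζ)) (Ioc 0 1) :=
    hF.deriv.continuousOn.comp (by fun_prop) fun t ht =>
      mem_ball_zero_iff.2 (norm_ofReal_mul_lt_one (Ioc_subset_Icc_self ht) hζ)
  have hpos : ∀ᵐ t ∂volume.restrict (Ioc (0 : ℝ) 1),
      ENNReal.ofReal ((1 - t * ‖ζ‖) * radialWeight δ (t * ‖ζ‖)) ≠ 0 :=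
    (ae_restrict_mem measurableSet_Ioc).mono fun t ht => (ENNReal.ofReal_pos.2
      (one_sub_mul_radialWeight_pos hζ (norm_nonneg ζ) (Ioc_subset_Icc_self ht))).ne'
  have hcauchy := sq_lintegral_le_lintegral_sq_mul_mul_lintegral_inv
    (hderiv.aemeasurable measurableSet_Ioc).enorm
    (Measurable.aemeasurable (by fun_prop)) hpos (ae_of_all _ fun _ => ENNReal.ofReal_ne_top)
  calc ‖F ζ - F 0‖ₑ ^ 2
      ≤ ‖ζ‖ₑ ^ 2 * (∫⁻ t in Ioc (0 : ℝ) 1, ‖deriv F (t * ζ)‖ₑ) ^ 2 := by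
        rw [← mul_pow]
        gcongr
        exact enorm_sub_le_lintegral_ray hF hζ
    _ ≤ ‖ζ‖ₑ ^ 2 * (_ * _) := by gcongr
    _ = _ * (‖ζ‖ₑ * _) := by rw [sq, mul_comm (∫⁻ t in Ioc (0 : ℝ) 1, _ * _), mul_mul_mul_comm]
    _ ≤ _ := by
        gcongr
        rw [← ofReal_norm ζ]
        exact ofReal_mul_lintegral_inv_radialWeight_le hδ (norm_nonneg ζ) hζ

-- Both `log (1 - |·|)` and `1 - |·|` vary by bounded amounts over hyperbolic discs.
lemma radialWeight_div_le_of_norm_sub_le (hδ : 0 < δ) (hz : ‖z‖ < 1)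
    (hw : ‖w - z‖ ≤ (1 - ‖z‖) / 2) :
    radialWeight δ ‖z‖ / (1 - ‖z‖) ≤ 9 / 2 * (radialWeight δ ‖w‖ / (1 - ‖w‖)) := by
  have hz' : 0 < 1 - ‖z‖ := sub_pos.2 hz
  have hw' : 0 < 1 - ‖w‖ := sub_pos.2 (norm_lt_one_of_norm_sub_le hz hw)
  have hle : 1 - ‖z‖ ≤ 2 * (1 - ‖w‖) := by linarith [norm_le_norm_add_norm_sub' w z]
  have hge : 2 * (1 - ‖w‖) ≤ 3 * (1 - ‖z‖) := by linarith [norm_le_norm_add_norm_sub w z]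
  have hdiff : Real.log ((1 - ‖z‖) / δ) - Real.log ((1 - ‖w‖) / δ) =
      Real.log ((1 - ‖z‖) / (1 - ‖w‖)) := by
    rw [← Real.log_div (by positivity) (by positivity), div_div_div_cancel_right₀ hδ.ne']
  have hlow : -1 ≤ Real.log ((1 - ‖z‖) / (1 - ‖w‖)) := by
    have h2 : (1 - ‖w‖) / (1 - ‖z‖) ≤ 2 := by rw [div_le_iff₀ hz']; linarith
    have := Real.one_sub_inv_le_log_of_pos (div_pos hz' hw')
    rw [inv_div] at this
    linarith
  have hhigh : Real.log ((1 - ‖z‖) / (1 - ‖w‖)) ≤ 1 := by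
    have h2 : (1 - ‖z‖) / (1 - ‖w‖) ≤ 2 := by rwa [div_le_iff₀ hw']
    linarith [Real.log_le_sub_one_of_pos (div_pos hz' hw')]
  have hweight : radialWeight δ ‖z‖ ≤ 3 * radialWeight δ ‖w‖ := by
    unfold radialWeight
    rw [← hdiff] at hlow hhigh
    nlinarith [sq_nonneg (2 * Real.log ((1 - ‖w‖) / δ) - Real.log ((1 - ‖z‖) / δ))]
  rw [← mul_div_assoc, div_le_div_iff₀ hz' hw']
  nlinarith [mul_le_mul hweight hge (by positivity)
    (mul_nonneg zero_le_three (radialWeight_pos δ ‖w‖).le)]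

lemma enorm_sq_mul_radialWeight_le {u : ℂ → ℂ} (hu : HolOn u) (hδ : 0 < δ) (hz : ‖z‖ < 1) :
    ‖u z‖ₑ ^ 2 * ENNReal.ofReal ((1 - ‖z‖) * radialWeight δ ‖z‖) ≤
      ENNReal.ofReal 18 * ∫⁻ w in ball z ((1 - ‖z‖) / 2),
        ‖u w‖ₑ ^ 2 * ENNReal.ofReal (radialWeight δ ‖w‖ / (1 - ‖w‖)) ∂dA := by
  have hz' : 0 < 1 - ‖z‖ := sub_pos.2 hz
  have hsub : ball z ((1 - ‖z‖) / 2) ⊆ ball 0 1 := fun w hw =>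
    mem_ball_zero_iff.2 (norm_lt_one_of_norm_sub_le hz (mem_ball_iff_norm.1 hw).le)
  have hmean : ENNReal.ofReal ((1 - ‖z‖) / 2) ^ 2 * ‖u z‖ₑ ^ 2 ≤
      ∫⁻ w in ball z ((1 - ‖z‖) / 2), ‖u w‖ₑ ^ 2 ∂dA := by
    simpa only [Pi.pow_apply, enorm_pow] using
      ofReal_sq_mul_enorm_le ((DifferentiableOn.pow hu 2).mono hsub)
  have hconst : ENNReal.ofReal ((1 - ‖z‖) * radialWeight δ ‖z‖) =
      ENNReal.ofReal (4 * (radialWeight δ ‖z‖ / (1 - ‖z‖))) *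
        ENNReal.ofReal ((1 - ‖z‖) / 2) ^ 2 := by
    have := radialWeight_pos δ ‖z‖
    rw [← ENNReal.ofReal_pow (by positivity), ← ENNReal.ofReal_mul (by positivity)]
    congr 1
    field
  calc _ = ENNReal.ofReal (4 * (radialWeight δ ‖z‖ / (1 - ‖z‖))) *
          (ENNReal.ofReal ((1 - ‖z‖) / 2) ^ 2 * ‖u z‖ₑ ^ 2) := by rw [hconst]; ring
    _ ≤ ENNReal.ofReal (4 * (radialWeight δ ‖z‖ / (1 - ‖z‖))) *
          ∫⁻ w in ball z ((1 - ‖z‖) / 2), ‖u w‖ₑ ^ 2 ∂dA := by gcongr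
    _ ≤ _ := by
        rw [← lintegral_const_mul' _ _ ENNReal.ofReal_ne_top,
          ← lintegral_const_mul' _ _ ENNReal.ofReal_ne_top]
        refine setLIntegral_mono' measurableSet_ball fun w hw => ?_
        rw [mul_left_comm, mul_comm, ← ENNReal.ofReal_mul (by norm_num)]
        refine mul_le_mul' le_rfl (ENNReal.ofReal_le_ofReal ?_)
        linarith [radialWeight_div_le_of_norm_sub_le hδ hz (mem_ball_iff_norm.1 hw).le]

/-- The parameters `t` for which `w` lies in the hyperbolic disc around the point `t ζ` of the
ray from `0` to `ζ`. -/
def rayShadow (ζ w : ℂ) : Set ℝ := {t | t ∈ Ioc (0 : ℝ) 1 ∧ ‖w - t * ζ‖ < (1 - ‖(t : ℂ) * ζ‖) / 2}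

lemma enorm_mul_volume_rayShadow_le (hζ : ‖ζ‖ < 1) (w : ℂ) :
    ‖ζ‖ₑ * volume (rayShadow ζ w) ≤ ENNReal.ofReal (2 * (1 - ‖w‖)) := by
  rcases eq_or_ne ζ 0 with rfl | hζ0
  · simp
  have hsub : rayShadow ζ w ⊆ (· * ‖ζ‖) ⁻¹' Ioo (2 * ‖w‖ - 1) 1 := by
    rintro t ⟨ht, hw⟩
    have hlt := norm_ofReal_mul_lt_one (Ioc_subset_Icc_self ht) hζ
    have htri := norm_le_norm_add_norm_sub' w (t * ζ)
    rw [norm_mul, Complex.norm_of_nonneg ht.1.le] at hlt hw htri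
    exact ⟨by linarith, hlt⟩
  calc ‖ζ‖ₑ * volume (rayShadow ζ w)
      ≤ ‖ζ‖ₑ * volume ((· * ‖ζ‖) ⁻¹' Ioo (2 * ‖w‖ - 1) 1) := by gcongr
    _ = ENNReal.ofReal (2 * (1 - ‖w‖)) := by
        rw [Real.volume_preimage_mul_right (norm_ne_zero_iff.2 hζ0), Real.volume_Ioo,
          abs_of_nonneg (by positivity), ← mul_assoc, ← ofReal_norm,
          ← ENNReal.ofReal_mul (norm_nonneg ζ), mul_inv_cancel₀ (norm_ne_zero_iff.2 hζ0),
          ENNReal.ofReal_one, one_mul]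
        congr 1
        ring

lemma one_sub_norm_sq_le_of_mem_rayShadow (hζ : ‖ζ‖ < 1) (hw : ‖w‖ < 1) {t : ℝ}
    (ht : t ∈ rayShadow ζ w) :
    1 - ‖ζ‖ ^ 2 ≤ 25 * ((1 - ‖w‖ ^ 2) * (1 - ‖phi w ζ‖ ^ 2)) := by
  obtain ⟨ht, hnear⟩ := ht
  rw [norm_mul, Complex.norm_of_nonneg ht.1.le] at hnear
  have htri := norm_le_norm_add_norm_sub' w (t * ζ)
  rw [norm_mul, Complex.norm_of_nonneg ht.1.le] at htri
  have hne := one_sub_conj_mul_ne_zero hw hζ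
  have hden : ‖1 - conj w * ζ‖ ≤ 5 * (1 - ‖w‖) := by
    have hsplit : 1 - conj w * ζ = ((1 - t * ‖ζ‖ ^ 2 : ℝ) : ℂ) - conj (w - t * ζ) * ζ := by
      push_cast
      rw [← Complex.conj_mul', map_sub, map_mul, Complex.conj_ofReal]
      ring
    have htζ : t * ‖ζ‖ ^ 2 ≤ 1 := by nlinarith [norm_nonneg ζ, ht.1, ht.2]
    rw [hsplit]
    refine (norm_sub_le _ _).trans ?_
    rw [norm_mul, RCLike.norm_conj, Complex.norm_of_nonneg (by linarith)]
    nlinarith [norm_nonneg ζ, ht.1, ht.2, mul_le_mul_of_nonneg_left ht.2 (norm_nonneg ζ),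
      mul_le_mul_of_nonneg_left hζ.le (norm_nonneg (w - t * ζ))]
  have hsq : ‖1 - conj w * ζ‖ ^ 2 ≤ 25 * (1 - ‖w‖ ^ 2) ^ 2 := by
    have hw1 : 1 - ‖w‖ ≤ 1 - ‖w‖ ^ 2 := by nlinarith [norm_nonneg w]
    nlinarith [norm_nonneg (1 - conj w * ζ)]
  rw [one_sub_norm_phi_sq hne, ← mul_div_assoc, ← mul_div_assoc,
    le_div_iff₀ (pow_pos (norm_pos_iff.2 hne) 2)]
  nlinarith [mul_le_mul_of_nonneg_left hsq (one_sub_norm_sq_pos hζ).le]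

lemma enorm_mul_volume_rayShadow_mul_le (hs : 0 ≤ s) (hζ : ‖ζ‖ < 1) (hw : ‖w‖ < 1) :
    ‖ζ‖ₑ * volume (rayShadow ζ w) * ENNReal.ofReal ((1 - ‖ζ‖ ^ 2) ^ s) ≤
      ENNReal.ofReal (2 * (1 - ‖w‖)) * ENNReal.ofReal (25 ^ s *
        ((1 - ‖w‖ ^ 2) ^ s * (1 - ‖phi w ζ‖ ^ 2) ^ s)) := by
  rcases (rayShadow ζ w).eq_empty_or_nonempty with hempty | ⟨t, ht⟩
  · simp [hempty]
  have hw2 := one_sub_norm_sq_pos hw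
  have hphi := one_sub_norm_phi_sq_pos hw hζ
  refine mul_le_mul' (enorm_mul_volume_rayShadow_le hζ w) (ENNReal.ofReal_le_ofReal ?_)
  rw [← Real.mul_rpow hw2.le hphi.le, ← Real.mul_rpow (by norm_num) (by positivity)]
  exact Real.rpow_le_rpow (one_sub_norm_sq_pos hζ).le
    (one_sub_norm_sq_le_of_mem_rayShadow hζ hw ht) hs

instance : SFinite dA := by
  unfold dA
  infer_instance

instance (s : ℝ) (a : ℂ) : SFinite (moebiusMeasure s a) := by
  unfold moebiusMeasure
  infer_instance

lemma lintegral_setLIntegral_prodMk_preimage {α β : Type*} [MeasurableSpace α] [MeasurableSpace β]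
    {μ : Measure α} {ν : Measure β} [SFinite μ] [SFinite ν] {R : Set (α × β)}
    (hR : MeasurableSet R) {Φ : β → ℝ≥0∞} (hΦ : AEMeasurable Φ ν) :
    ∫⁻ x, ∫⁻ y in Prod.mk x ⁻¹' R, Φ y ∂ν ∂μ = ∫⁻ y, μ ((·, y) ⁻¹' R) * Φ y ∂ν := by
  have hslice : ∀ x, ∫⁻ y in Prod.mk x ⁻¹' R, Φ y ∂ν = ∫⁻ y, R.indicator 1 (x, y) * Φ y ∂ν := by
    intro x
    rw [← lintegral_indicator (measurable_prodMk_left hR)]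
    refine lintegral_congr fun y => ?_
    by_cases h : (x, y) ∈ R <;> simp [h]
  simp only [hslice]
  rw [lintegral_lintegral_swap
    (((measurable_one.indicator hR).aemeasurable).mul hΦ.comp_snd)]
  refine lintegral_congr fun y => ?_
  have hsection : Measurable fun x => R.indicator (1 : α × β → ℝ≥0∞) (x, y) :=
    (measurable_one.indicator hR).comp measurable_prodMk_right
  rw [lintegral_mul_const _ hsection, ← lintegral_indicator_one (measurable_prodMk_right hR)]
  rfl

lemma aemeasurable_enorm_sq_of_continuousOn {u : ℂ → ℂ} (hu : ContinuousOn u (ball 0 1)) :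
    AEMeasurable (fun w => ‖u w‖ₑ ^ 2) (dA.restrict (ball 0 1)) :=
  (hu.aemeasurable measurableSet_ball).enorm.pow_const 2

lemma enorm_sub_sq_le_lintegral_rayShadow (hF : HolOn F) (hδ : 0 < δ) (hζ : ‖ζ‖ < 1) :
    ‖F ζ - F 0‖ₑ ^ 2 ≤ ENNReal.ofReal (18 * π) * ∫⁻ w in ball 0 1,
      ‖ζ‖ₑ * volume (rayShadow ζ w) *
        (‖deriv F w‖ₑ ^ 2 * ENNReal.ofReal (radialWeight δ ‖w‖ / (1 - ‖w‖))) ∂dA := by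
  set Φ : ℂ → ℝ≥0∞ := fun w =>
    ‖deriv F w‖ₑ ^ 2 * ENNReal.ofReal (radialWeight δ ‖w‖ / (1 - ‖w‖)) with hΦ
  have hΦm : AEMeasurable Φ (dA.restrict (ball 0 1)) := by
    have := measurable_radialWeight δ
    exact (aemeasurable_enorm_sq_of_continuousOn hF.deriv.continuousOn).mul (by fun_prop)
  set R : Set (ℝ × ℂ) := {p | ‖p.2 - p.1 * ζ‖ < (1 - ‖(p.1 : ℂ) * ζ‖) / 2}
  have hRm : MeasurableSet R := (isOpen_lt (by fun_prop) (by fun_prop)).measurableSet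
  have hdisc : ∀ t ∈ Ioc (0 : ℝ) 1,
      ‖deriv F (t * ζ)‖ₑ ^ 2 * ENNReal.ofReal ((1 - t * ‖ζ‖) * radialWeight δ (t * ‖ζ‖)) ≤
        ENNReal.ofReal 18 * ∫⁻ w in Prod.mk t ⁻¹' R, Φ w ∂dA.restrict (ball 0 1) := by
    intro t ht
    have hz := norm_ofReal_mul_lt_one (Ioc_subset_Icc_self ht) hζ
    have hball : Prod.mk t ⁻¹' R = ball ((t : ℂ) * ζ) ((1 - ‖(t : ℂ) * ζ‖) / 2) :=
      ext fun w => mem_ball_iff_norm.symm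
    have hsub : ball ((t : ℂ) * ζ) ((1 - ‖(t : ℂ) * ζ‖) / 2) ⊆ ball 0 1 := fun w hw =>
      mem_ball_zero_iff.2 (norm_lt_one_of_norm_sub_le hz (mem_ball_iff_norm.1 hw).le)
    rw [hball, Measure.restrict_restrict_of_subset hsub]
    simpa only [norm_mul, Complex.norm_of_nonneg ht.1.le] using
      enorm_sq_mul_radialWeight_le hF.deriv hδ hz
  calc ‖F ζ - F 0‖ₑ ^ 2
      ≤ ENNReal.ofReal π * (‖ζ‖ₑ * ∫⁻ t in Ioc (0 : ℝ) 1, ENNReal.ofReal 18 *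
          ∫⁻ w in Prod.mk t ⁻¹' R, Φ w ∂dA.restrict (ball 0 1)) :=
        (enorm_sub_sq_le_lintegral_ray hF hδ hζ).trans
          (by gcongr 1; gcongr 1; exact setLIntegral_mono' measurableSet_Ioc hdisc)
    _ = ENNReal.ofReal (18 * π) * (‖ζ‖ₑ * ∫⁻ w in ball 0 1, volume (rayShadow ζ w) * Φ w ∂dA) := by
        rw [lintegral_const_mul' _ _ ENNReal.ofReal_ne_top,
          lintegral_setLIntegral_prodMk_preimage hRm hΦm, ENNReal.ofReal_mul (by norm_num)]
        simp only [Measure.restrict_apply (measurable_prodMk_right hRm), inter_comm _ (Ioc _ _)]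
        change _ = _ * (_ * ∫⁻ w in ball 0 1, volume (Ioc 0 1 ∩ (·, w) ⁻¹' R) * Φ w ∂dA)
        ring
    _ = _ := by
        rw [← lintegral_const_mul' _ _ enorm_ne_top]
        simp only [hΦ, mul_assoc]

lemma volume_rayShadow_mul_radialWeight_mul_le (hs : 0 ≤ s) (hζ : ‖ζ‖ < 1)
    (hw : ‖w‖ < 1) (x : ℝ≥0∞) :
    ENNReal.ofReal (18 * π) * (‖ζ‖ₑ * volume (rayShadow ζ w) *
        (x * ENNReal.ofReal (radialWeight δ ‖w‖ / (1 - ‖w‖)))) *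
        ENNReal.ofReal ((1 - ‖ζ‖ ^ 2) ^ s) ≤
      ENNReal.ofReal (36 * π * 25 ^ s) * (x * ENNReal.ofReal (radialWeight δ ‖w‖) *
        ENNReal.ofReal ((1 - ‖phi w ζ‖ ^ 2) ^ s) * ENNReal.ofReal ((1 - ‖phi 0 w‖ ^ 2) ^ s)) := by
  have hw' : 0 < 1 - ‖w‖ := sub_pos.2 hw
  have hw2 := (one_sub_norm_sq_pos hw).le
  have hconst : ENNReal.ofReal (18 * π) * ENNReal.ofReal (radialWeight δ ‖w‖ / (1 - ‖w‖)) *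
      ENNReal.ofReal (2 * (1 - ‖w‖)) =
        ENNReal.ofReal (36 * π) * ENNReal.ofReal (radialWeight δ ‖w‖) := by
    have hW := radialWeight_pos δ ‖w‖
    rw [← ENNReal.ofReal_mul (by positivity), ← ENNReal.ofReal_mul (by positivity),
      ← ENNReal.ofReal_mul (by positivity)]
    congr 1
    field
  calc _ = ENNReal.ofReal (18 * π) * (x * ENNReal.ofReal (radialWeight δ ‖w‖ / (1 - ‖w‖))) *
        (‖ζ‖ₑ * volume (rayShadow ζ w) * ENNReal.ofReal ((1 - ‖ζ‖ ^ 2) ^ s)) := by ring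
    _ ≤ ENNReal.ofReal (18 * π) * (x * ENNReal.ofReal (radialWeight δ ‖w‖ / (1 - ‖w‖))) *
        (ENNReal.ofReal (2 * (1 - ‖w‖)) * ENNReal.ofReal (25 ^ s *
          ((1 - ‖w‖ ^ 2) ^ s * (1 - ‖phi w ζ‖ ^ 2) ^ s))) :=
      mul_le_mul' le_rfl (enorm_mul_volume_rayShadow_mul_le hs hζ hw)
    _ = (ENNReal.ofReal (18 * π) * ENNReal.ofReal (radialWeight δ ‖w‖ / (1 - ‖w‖)) *
        ENNReal.ofReal (2 * (1 - ‖w‖))) * x * ENNReal.ofReal (25 ^ s *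
          ((1 - ‖w‖ ^ 2) ^ s * (1 - ‖phi w ζ‖ ^ 2) ^ s)) := by ring
    _ = _ := by
      rw [hconst, phi_zero_left, norm_neg, ENNReal.ofReal_mul (p := 25 ^ s) (by positivity),
        ENNReal.ofReal_mul (p := (1 - ‖w‖ ^ 2) ^ s) (by positivity),
        ENNReal.ofReal_mul (p := 36 * π) (by positivity)]
      ring

lemma enorm_sub_sq_mul_le_lintegral_moebiusMeasure (hF : HolOn F) (hδ : 0 < δ) (hs : 0 ≤ s)
    (hζ : ‖ζ‖ < 1) :
    ‖F ζ - F 0‖ₑ ^ 2 * ENNReal.ofReal ((1 - ‖ζ‖ ^ 2) ^ s) ≤ ENNReal.ofReal (36 * π * 25 ^ s) *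
      ∫⁻ w, ‖deriv F w‖ₑ ^ 2 * ENNReal.ofReal (radialWeight δ ‖w‖) *
        ENNReal.ofReal ((1 - ‖phi w ζ‖ ^ 2) ^ s) ∂moebiusMeasure s 0 := by
  rw [lintegral_moebiusMeasure, ← lintegral_const_mul' _ _ ENNReal.ofReal_ne_top]
  calc _ ≤ (ENNReal.ofReal (18 * π) * _) * _ := by
        gcongr
        exact enorm_sub_sq_le_lintegral_rayShadow hF hδ hζ
    _ ≤ _ := by
        rw [← lintegral_const_mul' _ _ ENNReal.ofReal_ne_top,
          ← lintegral_mul_const' _ _ ENNReal.ofReal_ne_top]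
        exact setLIntegral_mono' measurableSet_ball fun w hw =>
          volume_rayShadow_mul_radialWeight_mul_le hs hζ (mem_ball_zero_iff.1 hw) _

lemma norm_phi_comm (a w : ℂ) : ‖phi a w‖ = ‖phi w a‖ := by
  rw [phi, phi, norm_div, norm_div, norm_sub_rev, norm_one_sub_conj_mul_comm]

lemma one_sub_norm_phi_mul_le (ha : ‖a‖ < 1) (hw : ‖w‖ < 1) :
    (1 - ‖phi a w‖) * (1 - ‖a‖) ≤ 4 * (1 - ‖w‖) := by
  have hne := one_sub_conj_mul_ne_zero ha hw
  have ha' : 0 < 1 - ‖a‖ := sub_pos.2 ha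
  have hphi : 1 - ‖phi a w‖ ≤ 1 - ‖phi a w‖ ^ 2 := by
    nlinarith [norm_nonneg (phi a w), norm_phi_lt_one ha hw]
  have hden : (1 - ‖a‖) ^ 2 ≤ ‖1 - conj a * w‖ ^ 2 := by
    gcongr
    exact one_sub_norm_le_left hw.le
  have hnum : (1 - ‖a‖ ^ 2) * (1 - ‖w‖ ^ 2) ≤ (2 * (1 - ‖a‖)) * (2 * (1 - ‖w‖)) := by
    gcongr <;> nlinarith [norm_nonneg a, norm_nonneg w]
  have hmain : (1 - ‖phi a w‖) * (1 - ‖a‖) ^ 2 ≤ (2 * (1 - ‖a‖)) * (2 * (1 - ‖w‖)) :=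
    calc (1 - ‖phi a w‖) * (1 - ‖a‖) ^ 2
        ≤ (1 - ‖phi a w‖ ^ 2) * ‖1 - conj a * w‖ ^ 2 :=
          mul_le_mul hphi hden (sq_nonneg _) (one_sub_norm_phi_sq_pos ha hw).le
      _ = (1 - ‖a‖ ^ 2) * (1 - ‖w‖ ^ 2) := by
          rw [one_sub_norm_phi_sq hne, div_mul_cancel₀ _ (pow_ne_zero 2 (norm_ne_zero_iff.2 hne))]
      _ ≤ _ := hnum
  refine le_of_mul_le_mul_right ?_ ha'
  linarith

lemma log_div_le_two_mul_log (ha : ‖a‖ < 1) (hw : ‖w‖ < 1) :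
    Real.log ((1 - ‖a‖) / (1 - ‖w‖)) ≤ 2 * Real.log (2 / (1 - ‖phi a w‖)) := by
  have ha' : 0 < 1 - ‖a‖ := sub_pos.2 ha
  have hw' : 0 < 1 - ‖w‖ := sub_pos.2 hw
  have hphi : 0 < 1 - ‖phi a w‖ := sub_pos.2 (norm_phi_lt_one ha hw)
  rw [← Real.log_rpow (by positivity), Real.rpow_two]
  refine Real.log_le_log (div_pos ha' hw') ?_
  rw [div_pow, div_le_div_iff₀ hw' (by positivity)]
  nlinarith [one_sub_norm_phi_mul_le ha hw, norm_nonneg (phi a w)]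

lemma log_two_le_log_two_div_one_sub_norm (ha : ‖a‖ < 1) :
    Real.log 2 ≤ Real.log (2 / (1 - ‖a‖)) := by
  refine Real.log_le_log two_pos ?_
  rw [le_div_iff₀ (sub_pos.2 ha)]
  linarith [norm_nonneg a]

lemma radialWeight_le_log_sq (ha : ‖a‖ < 1) (hw : ‖w‖ < 1) :
    radialWeight (1 - ‖a‖) ‖w‖ ≤ 8 * Real.log (2 / (1 - ‖phi a w‖)) ^ 2 := by
  have hlow := log_div_le_two_mul_log ha hw
  have hhigh := log_div_le_two_mul_log hw ha
  have hlog := log_two_le_log_two_div_one_sub_norm (norm_phi_lt_one ha hw)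
  rw [← inv_div, Real.log_inv] at hlow
  rw [norm_phi_comm] at hhigh
  have hsq := sq_le_sq' (by linarith) hhigh
  unfold radialWeight
  nlinarith [Real.log_two_gt_d9]

lemma measurable_moebiusWeight_uncurry (s : ℝ) :
    Measurable fun p : ℂ × ℂ => ENNReal.ofReal ((1 - ‖phi p.2 p.1‖ ^ 2) ^ s) := by
  have hconj : Measurable fun p : ℂ × ℂ => conj p.2 :=
    (Complex.continuous_conj.comp continuous_snd).measurable
  unfold phi
  fun_prop

lemma eLpNorm_sub_mul_sq_le_lintegral (hF : HolOn F) (hv : ContinuousOn v (ball 0 1)) (hδ : 0 < δ)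
    (hs : 0 ≤ s) :
    eLpNorm (fun ζ => (F ζ - F 0) * v ζ) 2 (moebiusMeasure s 0) ^ 2 ≤
      ENNReal.ofReal (36 * π * 25 ^ s) * ∫⁻ w, ‖deriv F w‖ₑ ^ 2 *
        ENNReal.ofReal (radialWeight δ ‖w‖) * eLpNorm v 2 (moebiusMeasure s w) ^ 2
          ∂moebiusMeasure s 0 := by
  set D : ℂ → ℝ≥0∞ := fun w => ‖deriv F w‖ₑ ^ 2 * ENNReal.ofReal (radialWeight δ ‖w‖)
  set k : ℂ → ℂ → ℝ≥0∞ := fun ζ w =>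
    ENNReal.ofReal (36 * π * 25 ^ s) * (D w * (‖v ζ‖ₑ ^ 2 *
      ENNReal.ofReal ((1 - ‖phi w ζ‖ ^ 2) ^ s)))
  have hD : AEMeasurable D (moebiusMeasure s 0) := by
    have := measurable_radialWeight δ
    exact ((aemeasurable_enorm_sq_of_continuousOn hF.deriv.continuousOn).mono_ac
      (moebiusMeasure_absolutelyContinuous s 0)).mul (by fun_prop)
  have hk : AEMeasurable (Function.uncurry k)
      ((dA.restrict (ball 0 1)).prod (moebiusMeasure s 0)) :=
    (hD.comp_snd.mul ((aemeasurable_enorm_sq_of_continuousOn hv).comp_fst.mul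
      (measurable_moebiusWeight_uncurry s).aemeasurable)).const_mul _
  calc eLpNorm (fun ζ => (F ζ - F 0) * v ζ) 2 (moebiusMeasure s 0) ^ 2
      ≤ ∫⁻ ζ in ball 0 1, ∫⁻ w, k ζ w ∂moebiusMeasure s 0 ∂dA := by
        rw [eLpNorm_two_sq, lintegral_moebiusMeasure]
        refine setLIntegral_mono' measurableSet_ball fun ζ hζ => ?_
        calc ‖(F ζ - F 0) * v ζ‖ₑ ^ 2 * ENNReal.ofReal ((1 - ‖phi 0 ζ‖ ^ 2) ^ s)
            = ‖v ζ‖ₑ ^ 2 * (‖F ζ - F 0‖ₑ ^ 2 * ENNReal.ofReal ((1 - ‖ζ‖ ^ 2) ^ s)) := by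
              rw [phi_zero_left, norm_neg, enorm_mul]
              ring
          _ ≤ ‖v ζ‖ₑ ^ 2 * _ := mul_le_mul' le_rfl
              (enorm_sub_sq_mul_le_lintegral_moebiusMeasure hF hδ hs (mem_ball_zero_iff.1 hζ))
          _ = ∫⁻ w, k ζ w ∂moebiusMeasure s 0 := by
              rw [mul_left_comm, ← lintegral_const_mul' _ _ (by finiteness),
                ← lintegral_const_mul' _ _ ENNReal.ofReal_ne_top]
              refine lintegral_congr fun w => ?_
              simp only [k, D, mul_left_comm]
    _ = ∫⁻ w, ∫⁻ ζ in ball 0 1, k ζ w ∂dA ∂moebiusMeasure s 0 := lintegral_lintegral_swap hk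
    _ = _ := by
        rw [← lintegral_const_mul' _ _ ENNReal.ofReal_ne_top]
        refine lintegral_congr fun w => ?_
        rw [lintegral_const_mul' _ _ ENNReal.ofReal_ne_top,
          lintegral_const_mul' _ _ (by finiteness), eLpNorm_two_sq, lintegral_moebiusMeasure]

lemma eLpNorm_sub_mul_sq_le (hF : HolOn F) (hv : ContinuousOn v (ball 0 1)) (hs : 0 ≤ s)
    (ha : ‖a‖ < 1) {M : ℝ≥0∞} (hM : ∀ c, ‖c‖ < 1 →
      ENNReal.ofReal (Real.log (2 / (1 - ‖phi a c‖))) * eLpNorm v 2 (moebiusMeasure s c) ≤ M) :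
    eLpNorm (fun ζ => (F ζ - F 0) * v ζ) 2 (moebiusMeasure s 0) ^ 2 ≤
      ENNReal.ofReal (36 * π * 25 ^ s) * (8 * M ^ 2) *
        eLpNorm (deriv F) 2 (moebiusMeasure s 0) ^ 2 := by
  have hpoint : ∀ w, ‖w‖ < 1 → ENNReal.ofReal (radialWeight (1 - ‖a‖) ‖w‖) *
      eLpNorm v 2 (moebiusMeasure s w) ^ 2 ≤ 8 * M ^ 2 := by
    intro w hw
    have hlog := (Real.log_nonneg one_le_two).trans
      (log_two_le_log_two_div_one_sub_norm (norm_phi_lt_one ha hw))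
    calc _ ≤ ENNReal.ofReal (8 * Real.log (2 / (1 - ‖phi a w‖)) ^ 2) *
          eLpNorm v 2 (moebiusMeasure s w) ^ 2 := by
          gcongr
          exact radialWeight_le_log_sq ha hw
      _ = 8 * (ENNReal.ofReal (Real.log (2 / (1 - ‖phi a w‖))) *
          eLpNorm v 2 (moebiusMeasure s w)) ^ 2 := by
          rw [ENNReal.ofReal_mul (by norm_num), ENNReal.ofReal_pow hlog, ENNReal.ofReal_ofNat]
          ring
      _ ≤ 8 * M ^ 2 := by
          gcongr
          exact hM w hw
  calc _ ≤ _ := eLpNorm_sub_mul_sq_le_lintegral hF hv (sub_pos.2 ha) hs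
    _ ≤ ENNReal.ofReal (36 * π * 25 ^ s) *
        ∫⁻ w, ‖deriv F w‖ₑ ^ 2 * (8 * M ^ 2) ∂moebiusMeasure s 0 := by
        gcongr 1
        refine lintegral_mono_ae ((ae_moebiusMeasure_mem_ball s 0).mono fun w hw => ?_)
        rw [mul_assoc]
        exact mul_le_mul' le_rfl (hpoint w (mem_ball_zero_iff.1 hw))
    _ = _ := by
        rw [lintegral_mul_const'' _ ((aemeasurable_enorm_sq_of_continuousOn
          hF.deriv.continuousOn).mono_ac (moebiusMeasure_absolutelyContinuous s 0)),
          eLpNorm_two_sq]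
        ring

end Embedding

section Sufficiency

variable {f g u : ℂ → ℂ} {a : ℂ} {s s₁ s₂ : ℝ}

lemma log_two_div_one_sub_norm_nonneg (ha : ‖a‖ < 1) : 0 ≤ Real.log (2 / (1 - ‖a‖)) :=
  (Real.log_nonneg one_le_two).trans (log_two_le_log_two_div_one_sub_norm ha)

lemma exists_norm_le_mul_log_of_mem_Qs (hs : 0 ≤ s) (hf : f ∈ Qs s) :
    ∃ K : ℝ≥0, ∀ a, ‖a‖ < 1 → ‖f a‖ ≤ K * Real.log (2 / (1 - ‖a‖)) := by
  obtain ⟨hfh, C, hC⟩ := mem_Qs_iff.1 hf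
  refine ⟨2 * ‖f 0‖₊ + 2 * 4 ^ s * C, fun a ha => ?_⟩
  have hgrowth := norm_sub_le_mul_log_of_one_sub_norm_mul_norm_deriv_le hfh
    (fun z hz => one_sub_norm_mul_norm_le_of_eLpNorm_le hfh.deriv hs hz (hC z hz)) ha
  have hlog : Real.log (2 / (1 - ‖a‖)) = Real.log 2 + Real.log (1 / (1 - ‖a‖)) := by
    rw [← Real.log_mul two_ne_zero (one_div_pos.2 (sub_pos.2 ha)).ne', mul_one_div]
  have hB : 0 ≤ 2 * 4 ^ s * (C : ℝ) := by positivity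
  calc ‖f a‖ ≤ ‖f 0‖ + ‖f a - f 0‖ := norm_le_insert' _ _
    _ ≤ 2 * ‖f 0‖ * Real.log (2 / (1 - ‖a‖)) +
        2 * 4 ^ s * C * Real.log (2 / (1 - ‖a‖)) := by
      refine add_le_add ?_ (hgrowth.trans (mul_le_mul_of_nonneg_left ?_ hB))
      · nlinarith [log_two_le_log_two_div_one_sub_norm ha, Real.log_two_gt_d9, norm_nonneg (f 0)]
      · linarith [Real.log_nonneg one_le_two]
    _ = _ := by
      push_cast
      ring

lemma holOn_phi (ha : ‖a‖ < 1) : HolOn (phi a) :=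
  holOn_of_hasDerivAt fun _ hz => hasDerivAt_phi (one_sub_conj_mul_ne_zero ha hz)

lemma HolOn.comp_phi (hf : HolOn f) (ha : ‖a‖ < 1) : HolOn (f ∘ phi a) :=
  DifferentiableOn.comp hf (holOn_phi ha) (bijOn_phi_ball ha).mapsTo

lemma HolOn.deriv_comp_phi (hf : HolOn f) (ha : ‖a‖ < 1) :
    EqOn (_root_.deriv (f ∘ phi a)) (fun w => _root_.deriv f (phi a w) * _root_.deriv (phi a) w)
      (ball 0 1) := by
  intro w hw
  rw [mem_ball_zero_iff] at hw
  exact ((hf.hasDerivAt (norm_phi_lt_one ha hw)).comp w ((holOn_phi ha).hasDerivAt hw)).deriv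

lemma eLpNorm_sub_apply_mul_sq_le (hf : HolOn f) (hu : ContinuousOn u (ball 0 1)) (hs : 0 ≤ s)
    (ha : ‖a‖ < 1) {M : ℝ≥0∞} (hM : ∀ c, ‖c‖ < 1 →
      ENNReal.ofReal (Real.log (2 / (1 - ‖c‖))) * eLpNorm u 2 (moebiusMeasure s c) ≤ M) :
    eLpNorm (fun z => (f z - f a) * u z) 2 (moebiusMeasure s a) ^ 2 ≤
      ENNReal.ofReal (36 * π * 25 ^ s) * (8 * M ^ 2) *
        eLpNorm (deriv f) 2 (moebiusMeasure s a) ^ 2 := by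
  have hphi := holOn_phi ha
  have hzero : ‖(0 : ℂ)‖ < 1 := by simp
  have hchange := fun c (hc : ‖c‖ < 1) (u : ℂ → ℂ) => eLpNorm_comp_phi_mul_deriv ha hc u s
  have hembed := eLpNorm_sub_mul_sq_le (M := M) (F := f ∘ phi a)
    (v := fun w => u (phi a w) * deriv (phi a) w) (hf.comp_phi ha)
    ((hu.comp hphi.continuousOn (bijOn_phi_ball ha).mapsTo).mul hphi.deriv.continuousOn) hs ha
    fun c hc => by
      rw [hchange c hc]
      exact hM _ (norm_phi_lt_one ha hc)
  rw [eLpNorm_moebiusMeasure_congr (hf.deriv_comp_phi ha), hchange 0 hzero (deriv f)] at hembed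
  simpa only [← mul_assoc, Function.comp_apply, phi_zero_right,
    hchange 0 hzero fun z => (f z - f a) * u z] using hembed

-- Split `u f = f(a) u + (f - f(a)) u` on each Möbius weight: the first term is controlled by the
-- logarithmic growth of `f`, the second one by the embedding.
lemma isCarleson_mul_of_log (hs : 0 ≤ s) (hu : ContinuousOn u (ball 0 1)) (hf : f ∈ Qs s)
    {M : ℝ≥0} (hM : ∀ c, ‖c‖ < 1 →
      ENNReal.ofReal (Real.log (2 / (1 - ‖c‖))) * eLpNorm u 2 (moebiusMeasure s c) ≤ M) :
    IsCarleson s fun z => u z * f z := by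
  obtain ⟨K, hK⟩ := exists_norm_le_mul_log_of_mem_Qs hs hf
  obtain ⟨hfh, C, hC⟩ := mem_Qs_iff.1 hf
  set B : ℝ≥0 := Real.toNNReal (36 * π * 25 ^ s) * (8 * M ^ 2)
  refine ⟨K * M + NNReal.sqrt B * C, fun a ha => ?_⟩
  have hconst : eLpNorm (fun z => f a * u z) 2 (moebiusMeasure s a) ≤ K * M := by
    calc eLpNorm (fun z => f a * u z) 2 (moebiusMeasure s a)
        = ‖f a‖ₑ * eLpNorm u 2 (moebiusMeasure s a) := eLpNorm_const_smul (f a) u 2 _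
      _ ≤ K * ENNReal.ofReal (Real.log (2 / (1 - ‖a‖))) * eLpNorm u 2 (moebiusMeasure s a) := by
        gcongr
        rw [← ofReal_norm, ← ENNReal.ofReal_coe_nnreal, ← ENNReal.ofReal_mul K.coe_nonneg]
        exact ENNReal.ofReal_le_ofReal (hK a ha)
      _ ≤ K * M := by
        rw [mul_assoc]
        gcongr
        exact hM a ha
  have hosc : eLpNorm (fun z => (f z - f a) * u z) 2 (moebiusMeasure s a) ≤
      NNReal.sqrt B * C := by
    rw [← ENNReal.pow_le_pow_left_iff two_ne_zero, mul_pow, ← ENNReal.coe_pow, NNReal.sq_sqrt]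
    refine (eLpNorm_sub_apply_mul_sq_le hfh hu hs ha hM).trans (mul_le_mul' ?_ ?_)
    · exact le_of_eq (by simp [B, ENNReal.ofReal])
    · gcongr
      exact hC a ha
  calc eLpNorm (fun z => u z * f z) 2 (moebiusMeasure s a)
      = eLpNorm ((fun z => f a * u z) + fun z => (f z - f a) * u z) 2 (moebiusMeasure s a) := by
        congr 1 with z
        simp only [Pi.add_apply]
        ring
    _ ≤ K * M + NNReal.sqrt B * C := by
        refine (eLpNorm_add_le (aestronglyMeasurable_moebiusMeasure (by fun_prop) s a)
          (aestronglyMeasurable_moebiusMeasure ?_ s a) one_le_two).trans (add_le_add hconst hosc)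
        exact (hfh.continuousOn.sub continuousOn_const).mul hu
    _ = _ := by push_cast; rfl

lemma mem_QsLog_one_iff : f ∈ QsLog s 1 ↔ HolOn f ∧ ∃ C : ℝ≥0, ∀ a, ‖a‖ < 1 →
    ENNReal.ofReal (Real.log (2 / (1 - ‖a‖))) * eLpNorm (deriv f) 2 (moebiusMeasure s a) ≤ C := by
  simp only [mem_QsLog_iff, Real.rpow_one]

lemma Qs_mono (h : s₁ ≤ s₂) : Qs s₁ ⊆ Qs s₂ := fun _ hf =>
  mem_Qs_iff.2 ⟨hf.1, (mem_Qs_iff.1 hf).2.mono_exponent h⟩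

lemma isCarleson_deriv_mul_of_mem_QsLog (hs : 0 ≤ s) (hg : g ∈ QsLog s 1) (hf : f ∈ Qs s) :
    IsCarleson s fun z => deriv g z * f z := by
  obtain ⟨hgh, M, hM⟩ := mem_QsLog_one_iff.1 hg
  exact isCarleson_mul_of_log hs hgh.deriv.continuousOn hf hM

lemma isCarleson_mul_deriv_of_mem_Hinf (hg : g ∈ Hinf) (hf : f ∈ Qs s) :
    IsCarleson s fun z => g z * deriv f z := by
  obtain ⟨-, B, hB⟩ := hg
  refine (mem_Qs_iff.1 hf).2.of_norm_le (B := B.toNNReal) fun z hz => ?_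
  rw [norm_mul]
  gcongr
  exact (hB z hz).trans (Real.le_coe_toNNReal B)

end Sufficiency

/-! ### Uniform boundedness for fields of functionals -/

section UniformBoundedness

open scoped lp

variable {Ω X E ι : Type*} [MeasurableSpace Ω] [NormedAddCommGroup X] [NormedSpace ℂ X]
  [NormedAddCommGroup E] [NormedSpace ℂ E] {μ : Measure Ω} {q : ℝ≥0∞}

lemma lowerSemicontinuous_eLpNorm_clm_apply {L : Ω → X →L[ℂ] E}
    (hL : ∀ c, AEStronglyMeasurable (fun x => L x c) μ) :
    LowerSemicontinuous fun c => eLpNorm (fun x => L x c) q μ := by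
  refine lowerSemicontinuous_iff_isClosed_preimage.2 fun y => IsSeqClosed.isClosed ?_
  intro c c₀ hc hlim
  have hfatou := Lp.eLpNorm_lim_le_liminf_eLpNorm (p := q) (fun n => hL (c n)) (fun x => L x c₀)
    (ae_of_all μ fun x => ((L x).continuous.tendsto c₀).comp hlim)
  exact hfatou.trans (liminf_le_of_frequently_le' (Frequently.of_forall hc))

lemma exists_eLpNorm_clm_apply_le [CompleteSpace X] {ν : ι → Measure Ω} {L : Ω → X →L[ℂ] E}
    (hq : 1 ≤ q) (hL : ∀ c i, AEStronglyMeasurable (fun x => L x c) (ν i))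
    (hbdd : ∀ c, ∃ C : ℝ≥0, ∀ i, eLpNorm (fun x => L x c) q (ν i) ≤ C) :
    ∃ C : ℝ≥0, ∀ c i, eLpNorm (fun x => L x c) q (ν i) ≤ C * ‖c‖ₑ := by
  set G : X → ℝ≥0∞ := fun c => ⨆ i, eLpNorm (fun x => L x c) q (ν i)
  have hG : ∀ c, G c ≠ ∞ := fun c =>
    let ⟨C, hC⟩ := hbdd c
    ((iSup_le hC).trans_lt ENNReal.coe_lt_top).ne
  have hadd : ∀ c d, G (c + d) ≤ G c + G d := fun c d => iSup_le fun i => by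
    simp only [map_add]
    exact (eLpNorm_add_le (hL c i) (hL d i) hq).trans
      (add_le_add (le_iSup (fun i => eLpNorm (fun x => L x c) q (ν i)) i)
        (le_iSup (fun i => eLpNorm (fun x => L x d) q (ν i)) i))
  have hsmul : ∀ (k : ℂ) c, G (k • c) = ‖k‖ₑ * G c := fun k c => by
    simp only [G, ENNReal.mul_iSup, map_smul]
    exact iSup_congr fun i => eLpNorm_const_smul k (fun x => L x c) q (ν i)
  have hlsc : LowerSemicontinuous G :=
    lowerSemicontinuous_iSup fun i => lowerSemicontinuous_eLpNorm_clm_apply fun c => hL c i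
  let p : Seminorm ℂ X := Seminorm.of (fun c => (G c).toReal)
    (fun c d => by
      rw [← ENNReal.toReal_add (hG c) (hG d)]
      exact ENNReal.toReal_mono (ENNReal.add_ne_top.2 ⟨hG c, hG d⟩) (hadd c d))
    fun k c => by simp only [hsmul, ENNReal.toReal_mul, toReal_enorm]
  have hp : LowerSemicontinuous p := by
    intro c y hy
    obtain hy₀ | hy₀ := lt_or_ge y 0
    · exact Eventually.of_forall fun d => hy₀.trans_le ENNReal.toReal_nonneg
    · filter_upwards [hlsc c _ ((ENNReal.ofReal_lt_iff_lt_toReal hy₀ (hG c)).2 hy)] with d hd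
      exact (ENNReal.ofReal_lt_iff_lt_toReal hy₀ (hG d)).1 hd
  obtain ⟨C, hC, hpC⟩ := p.bound_of_continuous_normedSpace (p.continuous_of_lowerSemicontinuous hp)
  refine ⟨C.toNNReal, fun c i => (le_iSup (fun i => eLpNorm (fun x => L x c) q (ν i)) i).trans ?_⟩
  calc G c = ENNReal.ofReal (p c) := (ENNReal.ofReal_toReal (hG c)).symm
    _ ≤ ENNReal.ofReal (C * ‖c‖) := ENNReal.ofReal_le_ofReal (hpC c)
    _ = C.toNNReal * ‖c‖ₑ := by rw [ENNReal.ofReal_mul hC.le, ofReal_norm]; rfl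

lemma hasSum_lp_one_clm_apply [DecidableEq ι] (T : ℓ¹(ι, ℂ) →L[ℂ] E)
    (c : ℓ¹(ι, ℂ)) : HasSum (fun i => c i • T (lp.single 1 i 1)) (T c) := by
  simpa only [← map_smul, ← lp.single_smul, smul_eq_mul, mul_one] using
    (lp.hasSum_single ENNReal.one_ne_top c).mapL T

lemma exists_lp_one_clm_single [DecidableEq ι] [CompleteSpace E] {x : ι → E} {K : ℝ}
    (hx : ∀ i, ‖x i‖ ≤ K) :
    ∃ T : ℓ¹(ι, ℂ) →L[ℂ] E, ∀ i, T (lp.single 1 i 1) = x i := by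
  have hK : ∀ i, ‖ContinuousLinearMap.toSpanSingleton ℂ (x i)‖ ≤ max K 0 := fun i =>
    (ContinuousLinearMap.norm_toSpanSingleton (x i)).trans_le ((hx i).trans (le_max_left _ _))
  refine ⟨(lp.tsumCLM ℂ ι E).comp (lp.mapCLM 1 _ (le_max_right K 0) hK), fun i => ?_⟩
  simp only [ContinuousLinearMap.comp_apply, lp.tsumCLM_apply]
  rw [tsum_eq_single i fun j hj => by simp [hj]]
  simp

lemma sum_enorm_le_enorm_lp_one (c : ℓ¹(ι, ℂ)) (t : Finset ι) :
    ∑ i ∈ t, ‖c i‖ₑ ≤ ‖c‖ₑ := by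
  simp only [← ofReal_norm]
  rw [← ENNReal.ofReal_sum_of_nonneg fun i _ => norm_nonneg (c i)]
  refine ENNReal.ofReal_le_ofReal ?_
  simpa only [ENNReal.toReal_one, Real.rpow_one] using
    lp.sum_rpow_le_norm_rpow (by simp) c t

lemma eLpNorm_lp_one_clm_apply_le [DecidableEq ι] {L : Ω → ℓ¹(ι, ℂ) →L[ℂ] E}
    {C : ℝ≥0∞} (hq : 1 ≤ q) (hL : ∀ c, AEStronglyMeasurable (fun x => L x c) μ)
    (hC : ∀ i, eLpNorm (fun x => L x (lp.single 1 i 1)) q μ ≤ C) (c : ℓ¹(ι, ℂ)) :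
    eLpNorm (fun x => L x c) q μ ≤ C * ‖c‖ₑ := by
  have hfin : ∀ t : Finset ι,
      eLpNorm (fun x => L x (∑ i ∈ t, c i • lp.single 1 i 1)) q μ ≤ C * ‖c‖ₑ := fun t => by
    simp only [map_sum, map_smul]
    calc eLpNorm (fun x => ∑ i ∈ t, c i • L x (lp.single 1 i 1)) q μ
        = eLpNorm (∑ i ∈ t, c i • fun x => L x (lp.single 1 i 1)) q μ := by
          congr 1 with x
          simp only [Finset.sum_apply, Pi.smul_apply]
      _ ≤ ∑ i ∈ t, eLpNorm (c i • fun x => L x (lp.single 1 i 1)) q μ :=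
        eLpNorm_sum_le (fun i _ => (hL _).const_smul (c i)) hq
      _ ≤ ∑ i ∈ t, ‖c i‖ₑ * C := by
        gcongr with i
        exact (eLpNorm_const_smul (c i) _ q μ).trans_le (mul_le_mul_right (hC i) _)
      _ ≤ C * ‖c‖ₑ := by
        rw [← Finset.sum_mul, mul_comm]
        gcongr
        exact sum_enorm_le_enorm_lp_one c t
  have hlim : Tendsto (fun t : Finset ι => ∑ i ∈ t, c i • lp.single 1 i (1 : ℂ)) atTop (𝓝 c) := by
    simpa only [HasSum, SummationFilter.unconditional_filter, ContinuousLinearMap.id_apply] using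
      hasSum_lp_one_clm_apply (ContinuousLinearMap.id ℂ _) c
  exact (lowerSemicontinuous_iff_isClosed_preimage.1 (lowerSemicontinuous_eLpNorm_clm_apply hL)
    _).mem_of_tendsto hlim (Eventually.of_forall hfin)

end UniformBoundedness

/-! ### Bounded families in `Q_s` -/

section BoundedFamily

open scoped lp

variable {ι : Type*} {f : ι → ℂ → ℂ} {α β : ℂ → ℂ} {s₁ s₂ : ℝ}

lemma hasDerivAt_tsum_mul {B : ℝ} (hf : ∀ i, HolOn (f i)) (hf₀ : ∀ i, f i 0 = 0)
    (hB : ∀ i z, ‖z‖ < 1 → (1 - ‖z‖) * ‖deriv (f i) z‖ ≤ B) {c : ι → ℂ}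
    (hc : Summable fun i => ‖c i‖) {z : ℂ} (hz : ‖z‖ < 1) :
    HasDerivAt (fun z => ∑' i, c i * f i z) (∑' i, c i * deriv (f i) z) z := by
  obtain ⟨r, hzr, hr⟩ := exists_between hz
  have hr₀ : 0 < r := (norm_nonneg z).trans_lt hzr
  have hball : IsPreconnected (ball (0 : ℂ) r) := (convex_ball 0 r).isPreconnected
  have hderiv : ∀ i w, w ∈ ball 0 r → HasDerivAt (fun z => c i * f i z) (c i * deriv (f i) w) w :=
    fun i w hw => ((hf i).hasDerivAt ((mem_ball_zero_iff.1 hw).trans hr)).const_mul (c i)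
  have hbound : ∀ i w, w ∈ ball 0 r → ‖c i * deriv (f i) w‖ ≤ ‖c i‖ * (B / (1 - r)) := by
    intro i w hw
    rw [mem_ball_zero_iff] at hw
    rw [norm_mul]
    gcongr
    rw [le_div_iff₀' (sub_pos.2 hr)]
    refine le_trans ?_ (hB i w (hw.trans hr))
    gcongr
  exact hasDerivAt_tsum_of_isPreconnected (hc.mul_right _) isOpen_ball hball hderiv hbound
    (mem_ball_self hr₀) (by simpa only [hf₀, mul_zero] using summable_zero)
    (mem_ball_zero_iff.2 hzr)

lemma exists_lp_one_clm_hasDerivAt [DecidableEq ι] {B : ℝ} (hf : ∀ i, HolOn (f i))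
    (hf₀ : ∀ i, f i 0 = 0) (hB : ∀ i z, ‖z‖ < 1 → (1 - ‖z‖) * ‖deriv (f i) z‖ ≤ B) :
    ∃ K D : ℂ → ℓ¹(ι, ℂ) →L[ℂ] ℂ, ∀ z, ‖z‖ < 1 →
      (∀ i, K z (lp.single 1 i 1) = f i z) ∧ (∀ i, D z (lp.single 1 i 1) = deriv (f i) z) ∧
      ∀ c, HasDerivAt (fun w => K w c) (D z c) z := by
  have hK : ∀ z, ∃ T : ℓ¹(ι, ℂ) →L[ℂ] ℂ, ‖z‖ < 1 →
      ∀ i, T (lp.single 1 i 1) = f i z := fun z => by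
    by_cases hz : ‖z‖ < 1
    · obtain ⟨T, hT⟩ := exists_lp_one_clm_single fun i => by
        simpa only [hf₀, sub_zero] using
          norm_sub_le_mul_log_of_one_sub_norm_mul_norm_deriv_le (hf i) (hB i) hz
      exact ⟨T, fun _ => hT⟩
    · exact ⟨0, fun h => absurd h hz⟩
  have hD : ∀ z, ∃ T : ℓ¹(ι, ℂ) →L[ℂ] ℂ, ‖z‖ < 1 →
      ∀ i, T (lp.single 1 i 1) = deriv (f i) z := fun z => by
    by_cases hz : ‖z‖ < 1
    · obtain ⟨T, hT⟩ := exists_lp_one_clm_single fun i =>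
        (le_div_iff₀' (sub_pos.2 hz)).2 (hB i z hz)
      exact ⟨T, fun _ => hT⟩
    · exact ⟨0, fun h => absurd h hz⟩
  choose K hK using hK
  choose D hD using hD
  refine ⟨K, D, fun z hz => ⟨hK z hz, hD z hz, fun c => ?_⟩⟩
  have hc : Summable fun i => ‖c i‖ := by
    simpa only [ENNReal.toReal_one, Real.rpow_one] using (lp.memℓp c).summable (by simp)
  have hKc : ∀ w, ‖w‖ < 1 → ∑' i, c i * f i w = K w c := fun w hw => by
    simpa only [hK w hw, smul_eq_mul] using (hasSum_lp_one_clm_apply (K w) c).tsum_eq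
  have hDc : ∑' i, c i * deriv (f i) z = D z c := by
    simpa only [hD z hz, smul_eq_mul] using (hasSum_lp_one_clm_apply (D z) c).tsum_eq
  rw [← hDc]
  refine (hasDerivAt_tsum_mul hf hf₀ hB hc hz).congr_of_eventuallyEq ?_
  filter_upwards [isOpen_ball.mem_nhds (mem_ball_zero_iff.2 hz)] with w hw
  exact (hKc w (mem_ball_zero_iff.1 hw)).symm

-- The combinations `∑ cᵢ fᵢ` with `c ∈ ℓ¹` all lie in `Q_{s₁}`, so the uniform boundedness
-- principle on the Banach space `ℓ¹` applies, although no topology is put on `Q_{s₁}` itself.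
lemma exists_eLpNorm_le_of_forall_mem_Qs (hs₁ : 0 ≤ s₁) (hf : ∀ i, HolOn (f i))
    (hf₀ : ∀ i, f i 0 = 0) {C : ℝ≥0}
    (hC : ∀ i a, ‖a‖ < 1 → eLpNorm (deriv (f i)) 2 (moebiusMeasure s₁ a) ≤ C)
    (hα : ContinuousOn α (ball 0 1)) (hβ : ContinuousOn β (ball 0 1))
    (h : ∀ F ∈ Qs s₁, IsCarleson s₂ fun z => α z * F z + β z * deriv F z) :
    ∃ C' : ℝ≥0, ∀ i a, ‖a‖ < 1 →
      eLpNorm (fun z => α z * f i z + β z * deriv (f i) z) 2 (moebiusMeasure s₂ a) ≤ C' := by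
  classical
  obtain ⟨K, D, hKD⟩ := exists_lp_one_clm_hasDerivAt hf hf₀ fun i z hz =>
    one_sub_norm_mul_norm_le_of_eLpNorm_le (hf i).deriv hs₁ hz (hC i z hz)
  have hderiv := fun c z hz => (hKD z hz).2.2 c
  have hK : ∀ c, HolOn fun z => K z c := fun c => holOn_of_hasDerivAt (hderiv c)
  have hD : ∀ c, EqOn (fun z => D z c) (deriv fun z => K z c) (ball 0 1) := fun c z hz =>
    (hderiv c z (mem_ball_zero_iff.1 hz)).deriv.symm
  have hDcont : ∀ c, ContinuousOn (fun z => D z c) (ball 0 1) := fun c =>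
    (hK c).deriv.continuousOn.congr (hD c)
  have hmem : ∀ c, (fun z => K z c) ∈ Qs s₁ := fun c => by
    refine (mem_Qs_iff_of_hasDerivAt (hderiv c)).2 ⟨C * ‖c‖₊, fun a ha => ?_⟩
    rw [ENNReal.coe_mul]
    refine eLpNorm_lp_one_clm_apply_le one_le_two
      (fun c => aestronglyMeasurable_moebiusMeasure (hDcont c) s₁ a) (fun i => ?_) c
    rw [eLpNorm_moebiusMeasure_congr fun z hz => (hKD z (mem_ball_zero_iff.1 hz)).2.1 i]
    exact hC i a ha
  obtain ⟨C', hC'⟩ := exists_eLpNorm_clm_apply_le (ι := {a : ℂ // ‖a‖ < 1}) (q := 2)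
    (ν := fun a => moebiusMeasure s₂ a) (L := fun z => α z • K z + β z • D z) one_le_two
    (fun c a => aestronglyMeasurable_moebiusMeasure
      ((hα.mul (hK c).continuousOn).add (hβ.mul (hDcont c))) s₂ a)
    (fun c => by
      obtain ⟨C', hC'⟩ := (h _ (hmem c)).congr fun z hz => by rw [← hD c hz]
      exact ⟨C', fun a => hC' a a.2⟩)
  refine ⟨C', fun i a ha => ?_⟩
  have hsingle : EqOn (fun z => (α z • K z + β z • D z) (lp.single 1 i 1))
      (fun z => α z * f i z + β z * deriv (f i) z) (ball 0 1) := fun z hz => by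
    obtain ⟨hKi, hDi, -⟩ := hKD z (mem_ball_zero_iff.1 hz)
    simp only [add_apply, smul_apply, smul_eq_mul, hKi, hDi]
  rw [← eLpNorm_moebiusMeasure_congr hsingle]
  refine (hC' (lp.single 1 i 1) ⟨a, ha⟩).trans_eq ?_
  rw [← ofReal_norm, lp.norm_single one_pos, norm_one, ENNReal.ofReal_one, mul_one]

end BoundedFamily

/-! ### Logarithmic test functions -/

section LogTest

variable {a b c w z : ℂ} {s t : ℝ}

/-- The test function `z ↦ log (1 - conj a * z)`: its `Q_s` norm is bounded uniformly in `a`, while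
its size at `a` is comparable to `log (2 / (1 - |a|))`. -/
def logTest (a z : ℂ) : ℂ := Complex.log (1 - conj a * z)

lemma logTest_zero (a : ℂ) : logTest a 0 = 0 := by simp [logTest]

lemma abs_log_norm_le_norm_logTest (a z : ℂ) :
    |Real.log ‖1 - conj a * z‖| ≤ ‖logTest a z‖ := by
  simpa only [logTest, Complex.log_re] using Complex.abs_re_le_norm (logTest a z)

lemma hasDerivAt_logTest (ha : ‖a‖ < 1) (hz : ‖z‖ < 1) :
    HasDerivAt (logTest a) (-conj a / (1 - conj a * z)) z := by
  have hden : HasDerivAt (fun z : ℂ => 1 - conj a * z) (-conj a) z := by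
    simpa using ((hasDerivAt_id z).const_mul (conj a)).const_sub 1
  refine hden.clog (Or.inl ?_)
  have hlt : ‖conj a * z‖ < 1 := by
    rw [norm_mul, RCLike.norm_conj]
    exact mul_lt_one_of_nonneg_of_lt_one_left (norm_nonneg a) ha hz.le
  simpa using (Complex.re_le_norm (conj a * z)).trans_lt hlt

lemma holOn_logTest (ha : ‖a‖ < 1) : HolOn (logTest a) :=
  holOn_of_hasDerivAt fun _ => hasDerivAt_logTest ha

lemma deriv_logTest (ha : ‖a‖ < 1) (hz : ‖z‖ < 1) :
    deriv (logTest a) z = -conj a / (1 - conj a * z) :=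
  (hasDerivAt_logTest ha hz).deriv

-- The logarithmic derivative in `w` of the identity `one_sub_conj_phi_mul_phi`.
lemma deriv_logTest_phi_mul_deriv_phi (hb : ‖b‖ < 1) (hc : ‖c‖ < 1) (hw : ‖w‖ < 1) :
    deriv (logTest (phi c b)) (phi c w) * deriv (phi c) w =
      deriv (logTest b) w - deriv (logTest c) w := by
  have hcb := one_sub_conj_mul_ne_zero hb hc
  have hcc := one_sub_conj_mul_ne_zero hc hc
  have hbw := one_sub_conj_mul_ne_zero hb hw
  have hcw := one_sub_conj_mul_ne_zero hc hw
  have hconj : conj (phi c b) = (conj c - conj b) / (1 - conj b * c) := by simp [phi, mul_comm]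
  rw [deriv_logTest (norm_phi_lt_one hc hb) (norm_phi_lt_one hc hw), deriv_logTest hb hw,
    deriv_logTest hc hw, (hasDerivAt_phi hcw).deriv, one_sub_conj_phi_mul_phi hc hb hw, hconj,
    mul_comm c]
  field_simp
  ring

lemma lintegral_ball_norm_rpow_lt_top (ht : -2 < t) :
    ∫⁻ w in ball (0 : ℂ) 1, ENNReal.ofReal (‖w‖ ^ t) < ⊤ := by
  refine IntegrableOn.setLIntegral_lt_top ?_
  rw [integrableOn_fun_norm_addHaar volume (f := fun r : ℝ => r ^ t)]
  have hrpow : IntegrableOn (fun r : ℝ => r ^ (1 + t)) (Ioo 0 1) :=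
    (intervalIntegral.integrableOn_Ioo_rpow_iff one_pos).2 (by linarith)
  refine hrpow.congr_fun (fun r hr => ?_) measurableSet_Ioo
  simp only [Complex.finrank_real_complex, smul_eq_mul, Nat.add_one_sub_one, pow_one,
    Real.rpow_add hr.1, Real.rpow_one]

-- Translate the part of the disc that is close to `p`; elsewhere the integrand is at most `1`.
lemma setLIntegral_ball_norm_sub_rpow_le (ht : t ≤ 0) (p : ℂ) :
    ∫⁻ w in ball 0 1, ENNReal.ofReal (‖w - p‖ ^ t) ≤
      (∫⁻ w in ball (0 : ℂ) 1, ENNReal.ofReal (‖w‖ ^ t)) + volume (ball (0 : ℂ) 1) := by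
  have hpt : ∀ w, ENNReal.ofReal (‖w - p‖ ^ t) ≤
      (ball p 1).indicator (fun w => ENNReal.ofReal (‖w - p‖ ^ t)) w + 1 := by
    intro w
    by_cases hw : w ∈ ball p 1
    · rw [indicator_of_mem hw]
      exact le_self_add
    · rw [indicator_of_notMem hw, zero_add, ENNReal.ofReal_le_one]
      exact Real.rpow_le_one_of_one_le_of_nonpos (by simpa [dist_eq_norm] using hw) ht
  have hpre : (fun w => w - p) ⁻¹' ball (0 : ℂ) 1 = ball p 1 := by
    ext w
    simp [dist_eq_norm]
  calc ∫⁻ w in ball 0 1, ENNReal.ofReal (‖w - p‖ ^ t)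
      ≤ ∫⁻ w in ball 0 1,
          ((ball p 1).indicator (fun w => ENNReal.ofReal (‖w - p‖ ^ t)) w + 1) := lintegral_mono hpt
    _ ≤ (∫⁻ w, (ball p 1).indicator (fun w => ENNReal.ofReal (‖w - p‖ ^ t)) w) +
          volume (ball (0 : ℂ) 1) := by
      rw [lintegral_add_right _ measurable_const, setLIntegral_one]
      exact add_le_add_left (setLIntegral_le_lintegral _ _) _
    _ = _ := by
      rw [lintegral_indicator measurableSet_ball, ← hpre]
      congr 1
      exact (measurePreserving_sub_right volume p).setLIntegral_comp_preimage measurableSet_ball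
        (f := fun w => ENNReal.ofReal (‖w‖ ^ t)) (by fun_prop)

lemma norm_deriv_logTest_sq_mul_le (hs : 0 ≤ s) (ha : ‖a‖ < 1) (ha₀ : a ≠ 0) (hw : ‖w‖ < 1) :
    ‖deriv (logTest a) w‖ ^ 2 * (1 - ‖w‖ ^ 2) ^ s ≤ 2 ^ s * ‖w - (conj a)⁻¹‖ ^ (s - 2) := by
  have hconj : conj a ≠ 0 := by simpa using ha₀
  have hp : 1 ≤ ‖(conj a)⁻¹‖ := by
    rw [norm_inv, RCLike.norm_conj]
    exact (one_le_inv₀ (norm_pos_iff.2 ha₀)).2 ha.le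
  have hdist : 1 - ‖w‖ ≤ ‖w - (conj a)⁻¹‖ := by
    linarith [norm_sub_norm_le (conj a)⁻¹ w, norm_sub_rev w (conj a)⁻¹]
  have hpos : 0 < ‖w - (conj a)⁻¹‖ := (sub_pos.2 hw).trans_le hdist
  have hderiv : deriv (logTest a) w = (w - (conj a)⁻¹)⁻¹ := by
    rw [deriv_logTest ha hw, ← mul_eq_one_iff_eq_inv₀ (norm_pos_iff.1 hpos), div_mul_eq_mul_div,
      div_eq_one_iff_eq (one_sub_conj_mul_ne_zero ha hw)]
    field_simp
    ring
  rw [hderiv, norm_inv, Real.rpow_sub hpos, Real.rpow_two, inv_pow, mul_div_assoc',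
    ← div_eq_inv_mul, ← Real.mul_rpow two_pos.le hpos.le]
  gcongr
  · exact (one_sub_norm_sq_pos hw).le
  · nlinarith [norm_nonneg w]

lemma exists_eLpNorm_deriv_logTest_zero_le (hs : 0 < s) :
    ∃ C : ℝ≥0, ∀ a, ‖a‖ < 1 → eLpNorm (deriv (logTest a)) 2 (moebiusMeasure s 0) ≤ C := by
  set r := min s 2
  have hr : 0 < r := lt_min hs two_pos
  set I := (ENNReal.ofReal π)⁻¹ * ((∫⁻ w in ball (0 : ℂ) 1, ENNReal.ofReal (‖w‖ ^ (r - 2))) +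
    volume (ball (0 : ℂ) 1))
  have hI : I ≠ ⊤ := by
    refine ENNReal.mul_ne_top (by simp [pi_pos]) (ENNReal.add_ne_top.2 ⟨?_, ?_⟩)
    · exact (lintegral_ball_norm_rpow_lt_top (by linarith)).ne
    · exact measure_ball_lt_top.ne
  refine ⟨NNReal.sqrt (ENNReal.ofReal (2 ^ r) * I).toNNReal, fun a ha => ?_⟩
  rw [← ENNReal.pow_le_pow_left_iff two_ne_zero, ← ENNReal.coe_pow, NNReal.sq_sqrt,
    ENNReal.coe_toNNReal (ENNReal.mul_ne_top ENNReal.ofReal_ne_top hI)]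
  rcases eq_or_ne a 0 with rfl | ha₀
  · have : logTest 0 = fun _ => 0 := by
      ext z
      simp [logTest]
    simp [this]
  calc eLpNorm (deriv (logTest a)) 2 (moebiusMeasure s 0) ^ 2
      ≤ eLpNorm (deriv (logTest a)) 2 (moebiusMeasure r 0) ^ 2 := by
        gcongr
        exact moebiusMeasure_anti (by simp) (min_le_left s 2)
    _ = ∫⁻ w in ball 0 1, ENNReal.ofReal (‖deriv (logTest a) w‖ ^ 2 * (1 - ‖w‖ ^ 2) ^ r) ∂dA := by
        simp only [eLpNorm_moebiusMeasure_sq, phi_zero_left, norm_neg]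
    _ ≤ ∫⁻ w in ball 0 1,
          ENNReal.ofReal (2 ^ r) * ENNReal.ofReal (‖w - (conj a)⁻¹‖ ^ (r - 2)) ∂dA := by
        refine setLIntegral_mono' measurableSet_ball fun w hw => ?_
        rw [← ENNReal.ofReal_mul (by positivity)]
        exact ENNReal.ofReal_le_ofReal
          (norm_deriv_logTest_sq_mul_le hr.le ha ha₀ (mem_ball_zero_iff.1 hw))
    _ ≤ ENNReal.ofReal (2 ^ r) * I := by
        rw [lintegral_const_mul' _ _ ENNReal.ofReal_ne_top, dA, Measure.restrict_smul,
          lintegral_smul_measure]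
        exact mul_le_mul_right (mul_le_mul_right (setLIntegral_ball_norm_sub_rpow_le
          (sub_nonpos.2 (min_le_right s 2)) _) _) _

-- Möbius invariance reduces the bound to the weight centred at `0`.
lemma exists_eLpNorm_deriv_logTest_le (hs : 0 < s) :
    ∃ C : ℝ≥0, ∀ a c, ‖a‖ < 1 → ‖c‖ < 1 →
      eLpNorm (deriv (logTest a)) 2 (moebiusMeasure s c) ≤ C := by
  obtain ⟨C, hC⟩ := exists_eLpNorm_deriv_logTest_zero_le hs
  refine ⟨C + C, fun a c ha hc => ?_⟩
  have hb := norm_phi_lt_one hc ha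
  have hmeas : ∀ b, ‖b‖ < 1 → AEStronglyMeasurable (deriv (logTest b)) (moebiusMeasure s 0) :=
    fun b hb => aestronglyMeasurable_moebiusMeasure (holOn_logTest hb).deriv.continuousOn s 0
  calc eLpNorm (deriv (logTest a)) 2 (moebiusMeasure s c)
      = eLpNorm (fun w => deriv (logTest a) (phi c w) * deriv (phi c) w) 2
          (moebiusMeasure s 0) := by
        rw [eLpNorm_comp_phi_mul_deriv hc (by simp), phi_zero_right]
    _ = eLpNorm (deriv (logTest (phi c a)) - deriv (logTest c)) 2 (moebiusMeasure s 0) := by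
        refine eLpNorm_moebiusMeasure_congr fun w hw => ?_
        rw [Pi.sub_apply, ← deriv_logTest_phi_mul_deriv_phi hb hc (mem_ball_zero_iff.1 hw),
          phi_phi hc ha]
    _ ≤ C + C := (eLpNorm_sub_le (hmeas _ hb) (hmeas c hc) one_le_two).trans
        (add_le_add (hC _ hb) (hC c hc))
    _ = _ := (ENNReal.coe_add C C).symm

end LogTest

/-! ### Necessity -/

section Necessity

variable {a z : ℂ} {g u : ℂ → ℂ} {s s₁ s₂ δ r : ℝ}

/-- The point `b` of the segment from `0` to `a` with `1 - |b|` comparable to `√(1 - |a|)`; it lies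
within bounded hyperbolic distance of the hyperbolic midpoint of `0` and `a`. -/
def approxMidpoint (a : ℂ) : ℂ := ((1 - √(1 - ‖a‖) : ℝ) : ℂ) * a

lemma norm_approxMidpoint_le (ha : ‖a‖ < 1) : ‖approxMidpoint a‖ ≤ 1 - √(1 - ‖a‖) := by
  have hsqrt : √(1 - ‖a‖) ≤ 1 := Real.sqrt_le_one.2 (by linarith [norm_nonneg a])
  rw [approxMidpoint, norm_mul, Complex.norm_of_nonneg (sub_nonneg.2 hsqrt)]
  exact mul_le_of_le_one_right (sub_nonneg.2 hsqrt) ha.le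

lemma norm_approxMidpoint_lt_one (ha : ‖a‖ < 1) : ‖approxMidpoint a‖ < 1 :=
  (norm_approxMidpoint_le ha).trans_lt (sub_lt_self 1 (Real.sqrt_pos.2 (sub_pos.2 ha)))

lemma norm_one_sub_conj_approxMidpoint_mul_le (ha : ‖a‖ < 1) (hz : ‖z‖ < 1)
    (h : √(1 - ‖a‖) ≤ ‖1 - conj a * z‖) :
    ‖1 - conj (approxMidpoint a) * z‖ ≤ 2 * ‖1 - conj a * z‖ := by
  have hsplit : 1 - conj (approxMidpoint a) * z =
      (1 - conj a * z) + (√(1 - ‖a‖) : ℂ) * (conj a * z) := by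
    rw [approxMidpoint, map_mul, Complex.conj_ofReal]
    push_cast
    ring
  have hsmall : ‖(√(1 - ‖a‖) : ℂ) * (conj a * z)‖ ≤ √(1 - ‖a‖) := by
    rw [norm_mul, norm_mul, RCLike.norm_conj, Complex.norm_of_nonneg (Real.sqrt_nonneg _)]
    exact mul_le_of_le_one_right (Real.sqrt_nonneg _) (mul_le_one₀ ha.le (norm_nonneg z) hz.le)
  rw [hsplit]
  linarith [norm_add_le (1 - conj a * z) ((√(1 - ‖a‖) : ℂ) * (conj a * z))]

lemma one_sub_norm_phi_sq_le_approxMidpoint (ha : ‖a‖ < 1) (hz : ‖z‖ < 1)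
    (h : √(1 - ‖a‖) ≤ ‖1 - conj a * z‖) :
    1 - ‖phi a z‖ ^ 2 ≤ 8 * √(1 - ‖a‖) * (1 - ‖phi (approxMidpoint a) z‖ ^ 2) := by
  have hb := norm_approxMidpoint_lt_one ha
  have hden := norm_one_sub_conj_approxMidpoint_mul_le ha hz h
  have hden_pos := norm_pos_iff.2 (one_sub_conj_mul_ne_zero hb hz)
  have hz2 := one_sub_norm_sq_pos hz
  have hsq : √(1 - ‖a‖) ^ 2 = 1 - ‖a‖ := Real.sq_sqrt (sub_nonneg.2 ha.le)
  have hweight : 1 - ‖a‖ ^ 2 ≤ 2 * √(1 - ‖a‖) * (1 - ‖approxMidpoint a‖ ^ 2) := by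
    have hle : √(1 - ‖a‖) ≤ 1 - ‖approxMidpoint a‖ ^ 2 := by
      nlinarith [norm_approxMidpoint_le ha, norm_nonneg (approxMidpoint a)]
    nlinarith [mul_le_mul_of_nonneg_left hle (Real.sqrt_nonneg (1 - ‖a‖)), norm_nonneg a]
  rw [one_sub_norm_phi_sq (one_sub_conj_mul_ne_zero ha hz),
    one_sub_norm_phi_sq (one_sub_conj_mul_ne_zero hb hz)]
  have hb2 := one_sub_norm_sq_pos hb
  calc (1 - ‖a‖ ^ 2) * (1 - ‖z‖ ^ 2) / ‖1 - conj a * z‖ ^ 2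
      = 4 * ((1 - ‖a‖ ^ 2) * (1 - ‖z‖ ^ 2)) / (2 * ‖1 - conj a * z‖) ^ 2 := by ring
    _ ≤ 4 * (2 * √(1 - ‖a‖) * (1 - ‖approxMidpoint a‖ ^ 2) * (1 - ‖z‖ ^ 2)) /
          ‖1 - conj (approxMidpoint a) * z‖ ^ 2 := by gcongr
    _ = _ := by ring

lemma log_two_div_sq_mul_rpow_le (hs : 0 < s) (hδ : 0 < δ) (hδ₁ : δ ≤ 1) :
    Real.log (2 / δ) ^ 2 * δ ^ (s / 2) ≤ 2 ^ (s / 2) * (16 / s ^ 2) := by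
  have hlog : Real.log (2 / δ) ≤ (2 / δ) ^ (s / 4) / (s / 4) :=
    Real.log_le_rpow_div (by positivity) (by positivity)
  have hlog₀ : 0 ≤ Real.log (2 / δ) := Real.log_nonneg ((one_le_div hδ).2 (by linarith))
  have hpow : ((2 / δ) ^ (s / 4)) ^ 2 = 2 ^ (s / 2) / δ ^ (s / 2) := by
    rw [← Real.rpow_mul_natCast (by positivity), ← Real.div_rpow two_pos.le hδ.le]
    congr 1
    push_cast
    ring
  calc Real.log (2 / δ) ^ 2 * δ ^ (s / 2)
      ≤ ((2 / δ) ^ (s / 4) / (s / 4)) ^ 2 * δ ^ (s / 2) := by gcongr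
    _ = 2 ^ (s / 2) * (16 / s ^ 2) := by
      rw [div_pow, hpow]
      field_simp
      norm_num

lemma log_sq_mul_weight_le_of_le_norm (hs : 0 < s) (ha : ‖a‖ < 1) (hz : ‖z‖ < 1)
    (h : √(1 - ‖a‖) ≤ ‖1 - conj a * z‖) :
    Real.log (2 / (1 - ‖a‖)) ^ 2 * (1 - ‖phi a z‖ ^ 2) ^ s ≤
      8 ^ s * (2 ^ (s / 2) * (16 / s ^ 2)) * (1 - ‖phi (approxMidpoint a) z‖ ^ 2) ^ s := by
  have hd : 0 < 1 - ‖a‖ := sub_pos.2 ha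
  have hphi := one_sub_norm_phi_sq_pos ha hz
  have hphi' := one_sub_norm_phi_sq_pos (norm_approxMidpoint_lt_one ha) hz
  have hsqrt : √(1 - ‖a‖) ^ s = (1 - ‖a‖) ^ (s / 2) := by
    rw [Real.sqrt_eq_rpow, ← Real.rpow_mul hd.le]
    ring_nf
  calc Real.log (2 / (1 - ‖a‖)) ^ 2 * (1 - ‖phi a z‖ ^ 2) ^ s
      ≤ Real.log (2 / (1 - ‖a‖)) ^ 2 *
          (8 * √(1 - ‖a‖) * (1 - ‖phi (approxMidpoint a) z‖ ^ 2)) ^ s := by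
        gcongr
        exact one_sub_norm_phi_sq_le_approxMidpoint ha hz h
    _ = 8 ^ s * (Real.log (2 / (1 - ‖a‖)) ^ 2 * (1 - ‖a‖) ^ (s / 2)) *
          (1 - ‖phi (approxMidpoint a) z‖ ^ 2) ^ s := by
        rw [Real.mul_rpow (by positivity) hphi'.le, Real.mul_rpow (by norm_num) (by positivity),
          hsqrt]
        ring
    _ ≤ _ := by
        refine mul_le_mul_of_nonneg_right (mul_le_mul_of_nonneg_left ?_ (by positivity))
          (by positivity)
        exact log_two_div_sq_mul_rpow_le hs hd (by linarith [norm_nonneg a])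

lemma log_sq_le_of_norm_le (ha : ‖a‖ < 1) (hz : ‖z‖ < 1) (h : ‖1 - conj a * z‖ ≤ √(1 - ‖a‖)) :
    Real.log (2 / (1 - ‖a‖)) ^ 2 ≤ 8 * ‖logTest a z‖ ^ 2 + 2 := by
  have hd : 0 < 1 - ‖a‖ := sub_pos.2 ha
  have hlog : Real.log ‖1 - conj a * z‖ ≤ Real.log (1 - ‖a‖) / 2 := by
    rw [← Real.log_sqrt hd.le]
    exact Real.log_le_log (norm_pos_iff.2 (one_sub_conj_mul_ne_zero ha hz)) h
  have hle : Real.log (2 / (1 - ‖a‖)) ≤ 2 * ‖logTest a z‖ + Real.log 2 := by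
    rw [Real.log_div two_ne_zero hd.ne']
    linarith [neg_abs_le (Real.log ‖1 - conj a * z‖), abs_log_norm_le_norm_logTest a z]
  nlinarith [log_two_div_one_sub_norm_nonneg ha, norm_nonneg (logTest a z), Real.log_two_gt_d9,
    Real.log_two_lt_d9, sq_nonneg (2 * ‖logTest a z‖ - Real.log 2)]

-- Near `a` the test function already has size `log (2 / (1 - |a|))`; away from `a`, passing to the
-- weight of the midpoint gains the power of `1 - |a|` that absorbs the logarithm.
lemma log_sq_mul_weight_le (hs : 0 < s) (ha : ‖a‖ < 1) (hz : ‖z‖ < 1) :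
    Real.log (2 / (1 - ‖a‖)) ^ 2 * (1 - ‖phi a z‖ ^ 2) ^ s ≤
      8 * (‖logTest a z‖ ^ 2 * (1 - ‖phi a z‖ ^ 2) ^ s) + 2 * (1 - ‖phi a z‖ ^ 2) ^ s +
        8 ^ s * (2 ^ (s / 2) * (16 / s ^ 2)) * (1 - ‖phi (approxMidpoint a) z‖ ^ 2) ^ s := by
  have hphi := one_sub_norm_phi_sq_pos ha hz
  have hphi' := one_sub_norm_phi_sq_pos (norm_approxMidpoint_lt_one ha) hz
  rcases le_total ‖1 - conj a * z‖ √(1 - ‖a‖) with hnear | hfar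
  · calc Real.log (2 / (1 - ‖a‖)) ^ 2 * (1 - ‖phi a z‖ ^ 2) ^ s
        ≤ (8 * ‖logTest a z‖ ^ 2 + 2) * (1 - ‖phi a z‖ ^ 2) ^ s := by
          gcongr
          exact log_sq_le_of_norm_le ha hz hnear
      _ = 8 * (‖logTest a z‖ ^ 2 * (1 - ‖phi a z‖ ^ 2) ^ s) + 2 * (1 - ‖phi a z‖ ^ 2) ^ s := by
          ring
      _ ≤ _ := le_add_of_nonneg_right (by positivity)
  · exact (log_sq_mul_weight_le_of_le_norm hs ha hz hfar).trans
      (le_add_of_nonneg_left (by positivity))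

lemma log_sq_mul_eLpNorm_sq_le (hs : 0 < s) (ha : ‖a‖ < 1) (hu : ContinuousOn u (ball 0 1)) :
    (ENNReal.ofReal (Real.log (2 / (1 - ‖a‖))) * eLpNorm u 2 (moebiusMeasure s a)) ^ 2 ≤
      8 * eLpNorm (fun z => u z * logTest a z) 2 (moebiusMeasure s a) ^ 2 +
        2 * eLpNorm u 2 (moebiusMeasure s a) ^ 2 +
        ENNReal.ofReal (8 ^ s * (2 ^ (s / 2) * (16 / s ^ 2))) *
          eLpNorm u 2 (moebiusMeasure s (approxMidpoint a)) ^ 2 := by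
  have hmeas : ∀ b, AEMeasurable (fun z => ENNReal.ofReal (‖u z‖ ^ 2 * (1 - ‖phi b z‖ ^ 2) ^ s))
      (dA.restrict (ball 0 1)) := by
    intro b
    have hum := hu.aemeasurable (μ := dA) measurableSet_ball
    have := measurable_phi b
    fun_prop
  set E : ℝ := 8 ^ s * (2 ^ (s / 2) * (16 / s ^ 2))
  have hE : 0 ≤ E := by positivity
  have h8 : (8 : ℝ≥0∞) = ENNReal.ofReal 8 := by simp
  have h2 : (2 : ℝ≥0∞) = ENNReal.ofReal 2 := by simp
  simp only [mul_pow, eLpNorm_moebiusMeasure_sq]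
  rw [← ENNReal.ofReal_pow (log_two_div_one_sub_norm_nonneg ha), h8, h2,
    ← lintegral_const_mul' _ _ ENNReal.ofReal_ne_top,
    ← lintegral_const_mul' _ _ ENNReal.ofReal_ne_top,
    ← lintegral_const_mul' _ _ ENNReal.ofReal_ne_top,
    ← lintegral_const_mul' _ _ ENNReal.ofReal_ne_top,
    ← lintegral_add_right' _ ((hmeas a).const_mul _),
    ← lintegral_add_right' _ ((hmeas (approxMidpoint a)).const_mul _)]
  refine setLIntegral_mono' measurableSet_ball fun z hz => ?_
  rw [mem_ball_zero_iff] at hz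
  have hphi := one_sub_norm_phi_sq_pos ha hz
  have hphi' := one_sub_norm_phi_sq_pos (norm_approxMidpoint_lt_one ha) hz
  rw [← ENNReal.ofReal_mul (by positivity), ← ENNReal.ofReal_mul (by positivity),
    ← ENNReal.ofReal_mul (by positivity), ← ENNReal.ofReal_mul hE,
    ← ENNReal.ofReal_add (by positivity) (by positivity),
    ← ENNReal.ofReal_add (by positivity) (by positivity), norm_mul]
  refine ENNReal.ofReal_le_ofReal ?_
  linarith [mul_le_mul_of_nonneg_left (log_sq_mul_weight_le hs ha hz) (sq_nonneg ‖u z‖)]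

lemma mem_QsLog_of_isCarleson_deriv_mul (hs₁ : 0 < s₁) (hs₂ : 0 < s₂) (hg : HolOn g)
    (h : ∀ f ∈ Qs s₁, IsCarleson s₂ fun z => deriv g z * f z) : g ∈ QsLog s₂ 1 := by
  obtain ⟨K, hK⟩ := exists_eLpNorm_deriv_logTest_le hs₁
  have hone : (fun _ => 1 : ℂ → ℂ) ∈ Qs s₁ :=
    mem_Qs_iff.2 ⟨differentiableOn_const 1, 0, fun a _ => by simp⟩
  obtain ⟨C, hC⟩ : IsCarleson s₂ (deriv g) := by simpa using h _ hone
  obtain ⟨D, hD⟩ := exists_eLpNorm_le_of_forall_mem_Qs (ι := {a : ℂ // ‖a‖ < 1}) hs₁.le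
    (fun a => holOn_logTest a.2) (fun a => logTest_zero a) (fun a c hc => hK a c a.2 hc)
    hg.deriv.continuousOn (continuousOn_const (c := 0)) (by simpa using h)
  simp only [zero_mul, add_zero] at hD
  set E : ℝ≥0 := (8 ^ s₂ * (2 ^ (s₂ / 2) * (16 / s₂ ^ 2)) : ℝ).toNNReal
  refine mem_QsLog_one_iff.2 ⟨hg, NNReal.sqrt (8 * D ^ 2 + 2 * C ^ 2 + E * C ^ 2), fun a ha => ?_⟩
  rw [← ENNReal.pow_le_pow_left_iff two_ne_zero, ← ENNReal.coe_pow, NNReal.sq_sqrt]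
  refine (log_sq_mul_eLpNorm_sq_le hs₂ ha hg.deriv.continuousOn).trans ?_
  push_cast
  gcongr
  · exact hD ⟨a, ha⟩ a ha
  · exact hC a ha
  · exact le_rfl
  · exact hC _ (norm_approxMidpoint_lt_one ha)

lemma mem_Hinf_of_norm_le {K : ℝ} (hg : HolOn g) (hr : r < 1)
    (h : ∀ z, r ≤ ‖z‖ → ‖z‖ < 1 → ‖g z‖ ≤ K) : g ∈ Hinf := by
  obtain ⟨C, hC⟩ := (isCompact_closedBall (0 : ℂ) r).exists_bound_of_continuousOn
    (hg.continuousOn.mono (closedBall_subset_ball hr))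
  refine ⟨hg, max K C, fun z hz => ?_⟩
  rcases le_total r ‖z‖ with hrz | hzr
  · exact (h z hrz (mem_ball_zero_iff.1 hz)).trans (le_max_left K C)
  · exact (hC z (mem_closedBall_zero_iff.2 hzr)).trans (le_max_right K C)

-- The derivative of the test function has size `|a| / (1 - |a|²)` at `a`.
lemma mem_Hinf_of_isCarleson_mul_deriv (hs₁ : 0 < s₁) (hs₂ : 0 ≤ s₂) (hg : HolOn g)
    (h : ∀ f ∈ Qs s₁, IsCarleson s₂ fun z => g z * deriv f z) : g ∈ Hinf := by
  obtain ⟨K, hK⟩ := exists_eLpNorm_deriv_logTest_le hs₁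
  obtain ⟨D, hD⟩ := exists_eLpNorm_le_of_forall_mem_Qs (ι := {a : ℂ // ‖a‖ < 1}) hs₁.le
    (fun a => holOn_logTest a.2) (fun a => logTest_zero a) (fun a c hc => hK a c a.2 hc)
    (continuousOn_const (c := 0)) hg.continuousOn (by simpa using h)
  simp only [zero_mul, zero_add] at hD
  refine mem_Hinf_of_norm_le (r := 1 / 2) (K := 4 * (2 * 4 ^ s₂ * D)) hg (by norm_num)
    fun a hra ha => ?_
  have hbound := one_sub_norm_mul_norm_le_of_eLpNorm_le
    (DifferentiableOn.mul hg (holOn_logTest ha).deriv) hs₂ ha (hD ⟨a, ha⟩ a ha)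
  have hpos : 0 < 1 - ‖a‖ := sub_pos.2 ha
  have hval : (1 - ‖a‖) * ‖g a * deriv (logTest a) a‖ = ‖g a‖ * ‖a‖ / (1 + ‖a‖) := by
    rw [norm_mul, deriv_logTest ha ha, norm_div, norm_neg, RCLike.norm_conj,
      norm_one_sub_conj_mul_self ha.le, show 1 - ‖a‖ ^ 2 = (1 - ‖a‖) * (1 + ‖a‖) by ring]
    field_simp
  rw [Pi.mul_apply, hval, div_le_iff₀ (by positivity)] at hbound
  have hB : 0 ≤ 2 * 4 ^ s₂ * (D : ℝ) := by positivity
  nlinarith [norm_nonneg (g a)]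

lemma log_one_div_one_sub_pos (hr : 0 < r) (hr₁ : r < 1) : 0 < Real.log (1 / (1 - r)) :=
  Real.log_pos ((one_lt_div (sub_pos.2 hr₁)).2 (sub_lt_self 1 hr))

lemma log_one_div_one_sub_le (hr : 1 / 2 ≤ r) (hr₁ : r < 1) :
    Real.log (1 / (1 - r)) ≤ 4 * |Real.log (1 - r ^ 2)| := by
  have h1 : 0 < 1 - r := sub_pos.2 hr₁
  have h2 : 0 < 1 - r ^ 2 := by nlinarith
  have hfactor : Real.log (1 - r ^ 2) = Real.log (1 - r) + Real.log (1 + r) := by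
    rw [← Real.log_mul h1.ne' (by linarith)]
    ring_nf
  have hcube : 3 * Real.log (1 - r ^ 2) + Real.log (1 + r) ≤ 0 := by
    have hlog : Real.log ((1 - r ^ 2) ^ 3 * (1 + r)) =
        3 * Real.log (1 - r ^ 2) + Real.log (1 + r) := by
      rw [Real.log_mul (pow_pos h2 3).ne' (by linarith), Real.log_pow]
      norm_num
    rw [← hlog]
    refine Real.log_nonpos (mul_nonneg (by positivity) (by linarith)) ?_
    calc (1 - r ^ 2) ^ 3 * (1 + r) ≤ (3 / 4) ^ 3 * 2 := by
          gcongr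
          · nlinarith
          · linarith
      _ ≤ 1 := by norm_num
  rw [one_div, Real.log_inv]
  linarith [neg_le_abs (Real.log (1 - r ^ 2))]

-- The growth of `g * logTest a` at the point `a` is compared with that of the test function itself.
lemma mem_Hinf_of_isCarleson_deriv_mul_add (hs₁ : 0 < s₁) (hs₂ : 0 ≤ s₂) (hg : HolOn g)
    (h : ∀ f ∈ Qs s₁, IsCarleson s₂ fun z => deriv g z * f z + g z * deriv f z) : g ∈ Hinf := by
  obtain ⟨K, hK⟩ := exists_eLpNorm_deriv_logTest_le hs₁
  obtain ⟨D, hD⟩ := exists_eLpNorm_le_of_forall_mem_Qs (ι := {a : ℂ // ‖a‖ < 1}) hs₁.le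
    (fun a => holOn_logTest a.2) (fun a => logTest_zero a) (fun a c hc => hK a c a.2 hc)
    hg.deriv.continuousOn hg.continuousOn h
  refine mem_Hinf_of_norm_le (r := 1 / 2) (K := 4 * (2 * 4 ^ s₂ * D)) hg (by norm_num)
    fun a hra ha => ?_
  have hprod : ∀ z, ‖z‖ < 1 → HasDerivAt (Mg g (logTest a))
      (deriv g z * logTest a z + g z * deriv (logTest a) z) z :=
    fun z hz => hasDerivAt_Mg hg (holOn_logTest ha) hz
  have hprodHol := holOn_of_hasDerivAt hprod
  have hbloch : ∀ z, ‖z‖ < 1 → (1 - ‖z‖) * ‖deriv (Mg g (logTest a)) z‖ ≤ 2 * 4 ^ s₂ * D := by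
    refine fun z hz => one_sub_norm_mul_norm_le_of_eLpNorm_le hprodHol.deriv hs₂ hz ?_
    rw [eLpNorm_moebiusMeasure_congr fun w hw => (hprod w (mem_ball_zero_iff.1 hw)).deriv]
    exact hD ⟨a, ha⟩ z hz
  have hgrowth :=
    norm_sub_le_mul_log_of_one_sub_norm_mul_norm_deriv_le hprodHol hbloch ha
  simp only [Mg, logTest_zero, mul_zero, sub_zero, norm_mul] at hgrowth
  have htest : Real.log (1 / (1 - ‖a‖)) ≤ 4 * ‖logTest a a‖ := by
    have := abs_log_norm_le_norm_logTest a a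
    rw [norm_one_sub_conj_mul_self ha.le] at this
    linarith [log_one_div_one_sub_le hra ha]
  refine le_of_mul_le_mul_right ?_ (log_one_div_one_sub_pos (by linarith) ha)
  linarith [mul_le_mul_of_nonneg_left htest (norm_nonneg (g a))]

end Necessity

/-! ### Characterizations of the bounded operators -/

section MapsInto

variable {g : ℂ → ℂ} {s₁ s₂ : ℝ}

lemma mapsInto_Tg_iff_isCarleson (hg : HolOn g) :
    MapsInto (Tg g) (Qs s₁) (Qs s₂) ↔ ∀ f ∈ Qs s₁, IsCarleson s₂ fun z => deriv g z * f z :=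
  forall₂_congr fun _ hf => mem_Qs_iff_of_hasDerivAt fun _ hz => hasDerivAt_Tg hg hf.1 hz

lemma mapsInto_Ig_iff_isCarleson (hg : HolOn g) :
    MapsInto (Ig g) (Qs s₁) (Qs s₂) ↔ ∀ f ∈ Qs s₁, IsCarleson s₂ fun z => g z * deriv f z :=
  forall₂_congr fun _ hf => mem_Qs_iff_of_hasDerivAt fun _ hz => hasDerivAt_Ig hg hf.1 hz

lemma mapsInto_Mg_iff_isCarleson (hg : HolOn g) :
    MapsInto (Mg g) (Qs s₁) (Qs s₂) ↔
      ∀ f ∈ Qs s₁, IsCarleson s₂ fun z => deriv g z * f z + g z * deriv f z :=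
  forall₂_congr fun _ hf => mem_Qs_iff_of_hasDerivAt fun _ hz => hasDerivAt_Mg hg hf.1 hz

theorem mapsInto_Tg_iff (hs₁ : 0 < s₁) (h₁₂ : s₁ ≤ s₂) (hg : HolOn g) :
    MapsInto (Tg g) (Qs s₁) (Qs s₂) ↔ g ∈ QsLog s₂ 1 := by
  have hs₂ := hs₁.trans_le h₁₂
  rw [mapsInto_Tg_iff_isCarleson hg]
  exact ⟨mem_QsLog_of_isCarleson_deriv_mul hs₁ hs₂ hg, fun h f hf =>
    isCarleson_deriv_mul_of_mem_QsLog hs₂.le h (Qs_mono h₁₂ hf)⟩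

theorem mapsInto_Ig_iff (hs₁ : 0 < s₁) (h₁₂ : s₁ ≤ s₂) (hg : HolOn g) :
    MapsInto (Ig g) (Qs s₁) (Qs s₂) ↔ g ∈ Hinf := by
  rw [mapsInto_Ig_iff_isCarleson hg]
  exact ⟨mem_Hinf_of_isCarleson_mul_deriv hs₁ (hs₁.le.trans h₁₂) hg, fun h f hf =>
    isCarleson_mul_deriv_of_mem_Hinf h (Qs_mono h₁₂ hf)⟩

theorem mapsInto_Mg_iff (hs₁ : 0 < s₁) (h₁₂ : s₁ ≤ s₂) (hg : HolOn g) :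
    MapsInto (Mg g) (Qs s₁) (Qs s₂) ↔ g ∈ QsLog s₂ 1 ∩ Hinf := by
  have hs₂ := hs₁.trans_le h₁₂
  have hcont : ∀ f ∈ Qs s₁, ContinuousOn (fun z => g z * deriv f z) (ball 0 1) :=
    fun f hf => hg.continuousOn.mul hf.1.deriv.continuousOn
  rw [mapsInto_Mg_iff_isCarleson hg]
  constructor
  · intro h
    have hgInf := mem_Hinf_of_isCarleson_deriv_mul_add hs₁ hs₂.le hg h
    refine ⟨mem_QsLog_of_isCarleson_deriv_mul hs₁ hs₂ hg fun f hf => ?_, hgInf⟩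
    have hderiv : ContinuousOn (fun z => deriv g z * f z) (ball 0 1) :=
      hg.deriv.continuousOn.mul hf.1.continuousOn
    simpa only [Pi.sub_def, add_sub_cancel_right] using
      (h f hf).sub (isCarleson_mul_deriv_of_mem_Hinf hgInf (Qs_mono h₁₂ hf))
        (hderiv.add (hcont f hf)) (hcont f hf)
  · rintro ⟨hgLog, hgInf⟩ f hf
    exact (isCarleson_deriv_mul_of_mem_QsLog hs₂.le hgLog (Qs_mono h₁₂ hf)).add
      (isCarleson_mul_deriv_of_mem_Hinf hgInf (Qs_mono h₁₂ hf))
      (hg.deriv.continuousOn.mul hf.1.continuousOn) (hcont f hf)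

end MapsInto

theorem stmt15_general (s₁ s₂ : ℝ) (hs₁ : 0 < s₁) (h₁₂ : s₁ ≤ s₂) (g : ℂ → ℂ) (hg : HolOn g) :
    (MapsInto (Tg g) (Qs s₁) (Qs s₂) ↔ g ∈ QsLog s₂ 1) ∧
    (MapsInto (Ig g) (Qs s₁) (Qs s₂) ↔ g ∈ Hinf) ∧
    (MapsInto (Mg g) (Qs s₁) (Qs s₂) ↔ g ∈ QsLog s₂ 1 ∩ Hinf) :=
  ⟨mapsInto_Tg_iff hs₁ h₁₂ hg, mapsInto_Ig_iff hs₁ h₁₂ hg, mapsInto_Mg_iff hs₁ h₁₂ hg⟩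

end

/-- For `0 < s₁ ≤ s₂ ≤ 1` and `g` holomorphic on the unit disc:
(i) `T_g` maps `Q_{s₁}` into `Q_{s₂}` iff `g ∈ Q_{s₂,log,1}`;
(ii) `I_g` maps `Q_{s₁}` into `Q_{s₂}` iff `g ∈ H^∞`;
(iii) `M_g` maps `Q_{s₁}` into `Q_{s₂}` iff `g ∈ Q_{s₂,log,1} ∩ H^∞`. -/
theorem stmt15 (s₁ s₂ : ℝ) (hs0 : 0 < s₁) (hs12 : s₁ ≤ s₂) (hs2 : s₂ ≤ 1)
    (g : ℂ → ℂ) (hg : HolOn g) :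
    (MapsInto (Tg g) (Qs s₁) (Qs s₂) ↔ g ∈ QsLog s₂ 1) ∧
    (MapsInto (Ig g) (Qs s₁) (Qs s₂) ↔ g ∈ Hinf) ∧
    (MapsInto (Mg g) (Qs s₁) (Qs s₂) ↔ g ∈ QsLog s₂ 1 ∩ Hinf) := by
  exact stmt15_general s₁ s₂ hs0 hs12 g hg
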